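/- arXiv:1111.3145 — 2 statements merged into one kernel-verified Lean document; each statement's English description precedes it below -/
import Mathlib

section
/- Let α, β > -1 and ε, δ ≥ 0 with α ≥ -ε/2 and β ≥ -δ/2. Define Φ_{ε,δ}(x) = (1-x)^{ε/2}(1+x)^{δ/2}. Then for all x, y ∈ [-1,1] and t > 0, Φ_{ε,δ}(x)Φ_{ε,δ}(y) G_t^{(α+ε, β+δ)}(x,y) ≤ exp( ((ε+δ)/2)(α+β+1+(ε+δ)/2) t ) · G_t^{(α,β)}(x,y), where G_t^{(α,β)} denotes the Jacobi heat kernel of type (α,β). -/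
open Real MeasureTheory

/-- Jacobi polynomial of type (a,b) and degree n, via the Rodrigues formula. -/
noncomputable def jacobiP (a b : ℝ) (n : ℕ) (x : ℝ) : ℝ :=
  ((-1 : ℝ) ^ n / ((2 : ℝ) ^ n * (n.factorial : ℝ))) * (1 - x) ^ (-a) * (1 + x) ^ (-b) *
    iteratedDeriv n (fun y : ℝ => (1 - y) ^ (a + (n : ℝ)) * (1 + y) ^ (b + (n : ℝ))) x

/-- The L²((1-x)^a(1+x)^b dx) normalizing constant of the Jacobi polynomials. -/
noncomputable def hJacobi (a b : ℝ) (n : ℕ) : ℝ :=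
  ∫ x in Set.Icc (-1 : ℝ) 1, (jacobiP a b n x) ^ 2 * (1 - x) ^ a * (1 + x) ^ b

/-- The Jacobi heat kernel G_t^{(a,b)}(x,y). -/
noncomputable def jacobiHeat (a b : ℝ) (t x y : ℝ) : ℝ :=
  ∑' n : ℕ, Real.exp (-t * (n : ℝ) * ((n : ℝ) + a + b + 1)) *
    jacobiP a b n x * jacobiP a b n y / hJacobi a b n

/-!
Write `α = A - e`, `β = B - d` with `e = ε / 2`, `d = δ / 2`, so that `A, B ≥ 0`, and let
`κ = (e + d) (A + B + 1)`. Conjugating by `Φ` turns the inequality into a comparison of the heat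
flows of types `(A + e, B + d)` and `(A - e, B - d)`, paired in `L²` of the intermediate weight
`w_{A,B}`. For polynomials `p, q ≥ 0` let `v` be the first flow started from `q` and `u` the second
one started from `p`. Both are nonnegative by the maximum principle, and an integration by parts
then shows that `s ↦ e^{-κ s} ∫ u(t - s) v(s) w_{A,B}` has nonpositive derivative. Comparing its
values at `0` and `t` gives the kernel inequality tested against `p` and `q`, and powers of
polynomials peaked at `x` and at `y` recover the pointwise inequality. Flows started from
polynomials stay polynomial, so the monotonicity argument only differentiates finite sums.
-/

section CoeffNorm

open Polynomial

variable {R : Type*} [NormedRing R]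

/-- The `ℓ¹` norm of the coefficients, which dominates the sup norm on the unit ball. -/
noncomputable def coeffNorm (p : R[X]) : ℝ := p.sum fun _ c => ‖c‖

lemma coeffNorm_eq_sum_range {p : R[X]} {N : ℕ} (h : p.natDegree < N) :
    coeffNorm p = ∑ i ∈ Finset.range N, ‖p.coeff i‖ :=
  sum_over_range' p (fun _ => norm_zero) N h

lemma coeffNorm_nonneg (p : R[X]) : 0 ≤ coeffNorm p :=
  Finset.sum_nonneg fun _ _ => norm_nonneg _

lemma coeffNorm_neg (p : R[X]) : coeffNorm (-p) = coeffNorm p := by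
  rw [coeffNorm_eq_sum_range (p := -p) (by rw [natDegree_neg]; exact Nat.lt_succ_self _),
    coeffNorm_eq_sum_range (Nat.lt_succ_self _)]
  simp only [coeff_neg, norm_neg]

lemma coeffNorm_add_le (p q : R[X]) : coeffNorm (p + q) ≤ coeffNorm p + coeffNorm q := by
  have hN := Nat.lt_succ_self (max p.natDegree q.natDegree)
  rw [coeffNorm_eq_sum_range ((natDegree_add_le p q).trans_lt hN),
    coeffNorm_eq_sum_range ((le_max_left _ _).trans_lt hN),
    coeffNorm_eq_sum_range ((le_max_right _ _).trans_lt hN), ← Finset.sum_add_distrib]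
  exact Finset.sum_le_sum fun i _ => by rw [coeff_add]; exact norm_add_le _ _

lemma coeffNorm_sub_le (p q : R[X]) : coeffNorm (p - q) ≤ coeffNorm p + coeffNorm q := by
  simpa only [sub_eq_add_neg, coeffNorm_neg] using coeffNorm_add_le p (-q)

lemma coeffNorm_C_mul_le (c : R) (p : R[X]) : coeffNorm (C c * p) ≤ ‖c‖ * coeffNorm p := by
  rw [coeffNorm_eq_sum_range ((natDegree_C_mul_le c p).trans_lt (Nat.lt_succ_self _)),
    coeffNorm_eq_sum_range (Nat.lt_succ_self _), Finset.mul_sum]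
  exact Finset.sum_le_sum fun i _ => by rw [coeff_C_mul]; exact norm_mul_le _ _

lemma coeffNorm_X_mul (p : R[X]) : coeffNorm (X * p) = coeffNorm p := by
  have h : (X * p).natDegree < p.natDegree + 1 + 1 := by
    have := natDegree_mul_le (p := X) (q := p)
    have := natDegree_X_le (R := R)
    omega
  rw [coeffNorm_eq_sum_range h, coeffNorm_eq_sum_range (Nat.lt_succ_self _),
    Finset.sum_range_succ']
  simp only [coeff_X_mul, coeff_X_mul_zero, norm_zero, add_zero]

variable [NormOneClass R]

lemma coeffNorm_one : coeffNorm (1 : R[X]) = 1 := by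
  rw [coeffNorm, ← C_1, sum_C_index norm_zero, norm_one]

lemma coeffNorm_derivative_le {p : R[X]} {n : ℕ} (hp : p.natDegree ≤ n) :
    coeffNorm (derivative p) ≤ n * coeffNorm p := by
  have hterm (i : ℕ) (hi : i ∈ Finset.range n) :
      ‖(derivative p).coeff i‖ ≤ n * ‖p.coeff (i + 1)‖ := by
    have hin : ((i + 1 : ℕ) : ℝ) ≤ n := by exact_mod_cast Finset.mem_range.1 hi
    rw [coeff_derivative, mul_comm (n : ℝ)]
    refine (norm_mul_le _ _).trans (mul_le_mul_of_nonneg_left ?_ (norm_nonneg _))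
    simpa using (Nat.norm_cast_le (α := R) (i + 1)).trans (by simpa using hin)
  calc coeffNorm (derivative p)
      = ∑ i ∈ Finset.range n, ‖(derivative p).coeff i‖ := by
        rcases n.eq_zero_or_pos with rfl | hn
        · rw [natDegree_eq_zero.1 (Nat.le_zero.1 hp) |>.choose_spec.symm]
          simp [coeffNorm]
        · exact coeffNorm_eq_sum_range ((natDegree_derivative_le p).trans_lt (by omega))
    _ ≤ ∑ i ∈ Finset.range n, n * ‖p.coeff (i + 1)‖ := Finset.sum_le_sum hterm
    _ ≤ n * (∑ i ∈ Finset.range n, ‖p.coeff (i + 1)‖ + ‖p.coeff 0‖) := by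
        rw [← Finset.mul_sum]; gcongr; exact le_add_of_nonneg_right (norm_nonneg _)
    _ = n * coeffNorm p := by
        rw [← Finset.sum_range_succ' fun i => ‖p.coeff i‖,
          coeffNorm_eq_sum_range (Nat.lt_succ_of_le hp)]

lemma norm_eval_le_coeffNorm (p : R[X]) {x : R} (hx : ‖x‖ ≤ 1) : ‖p.eval x‖ ≤ coeffNorm p := by
  rw [eval_eq_sum]
  refine (norm_sum_le _ _).trans (Finset.sum_le_sum fun i _ => ?_)
  calc ‖p.coeff i * x ^ i‖ ≤ ‖p.coeff i‖ * ‖x‖ ^ i :=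
        (norm_mul_le _ _).trans (mul_le_mul_of_nonneg_left (norm_pow_le x i) (norm_nonneg _))
    _ ≤ ‖p.coeff i‖ := mul_le_of_le_one_right (norm_nonneg _) (pow_le_one₀ (norm_nonneg _) hx)

end CoeffNorm

section JacobiPolynomial

open Polynomial

/-- The operator `R ↦ w_{A-1,B-1}⁻¹ (w_{A,B} R)'` on polynomials, where
`w_{A,B} = (1-x)^A (1+x)^B`. -/
noncomputable def jacobiOp (A B : ℝ) : ℝ[X] →ₗ[ℝ] ℝ[X] :=
  LinearMap.mulLeft ℝ (C (B - A) - C (A + B) * X) + LinearMap.mulLeft ℝ (1 - X ^ 2) ∘ₗ derivative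

lemma jacobiOp_apply (A B : ℝ) (R : ℝ[X]) :
    jacobiOp A B R = (C (B - A) - C (A + B) * X) * R + (1 - X ^ 2) * derivative R := rfl

lemma eval_jacobiOp (A B : ℝ) (R : ℝ[X]) (x : ℝ) :
    (jacobiOp A B R).eval x =
      (B - A - (A + B) * x) * R.eval x + (1 - x ^ 2) * (derivative R).eval x := by
  simp [jacobiOp_apply]

lemma jacobiOp_mul (A B : ℝ) (R Q : ℝ[X]) :
    jacobiOp A B (R * Q) = jacobiOp A B R * Q + (1 - X ^ 2) * (R * derivative Q) := by
  simp only [jacobiOp_apply, derivative_mul]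
  ring

lemma derivative_jacobiOp (A B : ℝ) (R : ℝ[X]) :
    derivative (jacobiOp A B R) =
      jacobiOp (A + 1) (B + 1) (derivative R) - C (A + B) * R := by
  simp only [jacobiOp_apply, derivative_mul, derivative_add, derivative_sub, derivative_C,
    derivative_X, derivative_one, derivative_X_pow, C_add, C_sub, C_1]
  simp only [Nat.cast_ofNat, map_ofNat, Nat.add_one_sub_one, pow_one]
  ring

lemma jacobiOp_eq_monomials (A B : ℝ) (R : ℝ[X]) :
    jacobiOp A B R = C (B - A) * R - C (A + B) * (X * R) + derivative R -
      X * (X * derivative R) := by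
  rw [jacobiOp_apply]
  ring

lemma coeff_jacobiOp_succ (A B : ℝ) (R : ℝ[X]) (n : ℕ) :
    (jacobiOp A B R).coeff (n + 1) = -(A + B + n) * R.coeff n + (B - A) * R.coeff (n + 1) +
      (n + 2) * R.coeff (n + 2) := by
  simp only [jacobiOp_eq_monomials, coeff_add, coeff_sub, coeff_C_mul, coeff_X_mul,
    coeff_derivative]
  rcases n with - | n
  · simp; ring
  · simp only [coeff_X_mul, coeff_derivative]; push_cast; ring

lemma natDegree_jacobiOp_le (A B : ℝ) {R : ℝ[X]} {n : ℕ} (hR : R.natDegree ≤ n) :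
    (jacobiOp A B R).natDegree ≤ n + 1 := by
  rw [natDegree_le_iff_coeff_eq_zero] at hR ⊢
  intro k hk
  obtain ⟨k, rfl⟩ : ∃ j, k = j + 1 := ⟨k - 1, by omega⟩
  rw [coeff_jacobiOp_succ, hR k (by omega), hR (k + 1) (by omega), hR (k + 2) (by omega)]
  simp

lemma coeffNorm_jacobiOp_le (A B : ℝ) {R : ℝ[X]} {n : ℕ} (hR : R.natDegree ≤ n) :
    coeffNorm (jacobiOp A B R) ≤ 2 * (|A| + |B| + n) * coeffNorm R := by
  have hlin : coeffNorm (C (B - A) * R - C (A + B) * (X * R)) ≤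
      2 * (|A| + |B|) * coeffNorm R := by
    refine (coeffNorm_sub_le _ _).trans ((add_le_add (coeffNorm_C_mul_le _ _)
      (coeffNorm_C_mul_le _ _)).trans ?_)
    rw [coeffNorm_X_mul, ← add_mul, Real.norm_eq_abs, Real.norm_eq_abs]
    gcongr
    · exact coeffNorm_nonneg R
    · linarith [abs_sub B A, abs_add_le A B]
  have hder := coeffNorm_derivative_le hR
  rw [jacobiOp_eq_monomials]
  refine (coeffNorm_sub_le _ _).trans ((add_le_add_left (coeffNorm_add_le _ _) _).trans ?_)
  rw [coeffNorm_X_mul, coeffNorm_X_mul]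
  linarith

/-- The Jacobi polynomials, as elements of `ℝ[X]`, defined by iterating the one-step form
`w_{a,b} P_{n+1}^{(a,b)} = -(w_{a+1,b+1} P_n^{(a+1,b+1)})' / (2 (n + 1))` of Rodrigues' formula. -/
noncomputable def jacobiPoly : ℝ → ℝ → ℕ → ℝ[X]
  | _, _, 0 => 1
  | a, b, n + 1 =>
    (-1 / (2 * (n + 1) : ℝ)) • jacobiOp (a + 1) (b + 1) (jacobiPoly (a + 1) (b + 1) n)

@[simp]
lemma jacobiPoly_zero (a b : ℝ) : jacobiPoly a b 0 = 1 := by rw [jacobiPoly]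

lemma jacobiPoly_succ (a b : ℝ) (n : ℕ) : jacobiPoly a b (n + 1) =
    (-1 / (2 * (n + 1) : ℝ)) • jacobiOp (a + 1) (b + 1) (jacobiPoly (a + 1) (b + 1) n) := by
  rw [jacobiPoly]

lemma natDegree_jacobiPoly_le (a b : ℝ) (n : ℕ) : (jacobiPoly a b n).natDegree ≤ n := by
  induction n generalizing a b with
  | zero => simp
  | succ n ih =>
    rw [jacobiPoly_succ]
    exact (natDegree_smul_le _ _).trans (natDegree_jacobiOp_le _ _ (ih _ _))

lemma coeff_jacobiPoly_succ (a b : ℝ) (n : ℕ) : (jacobiPoly a b (n + 1)).coeff (n + 1) =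
    (a + b + 2 + n) / (2 * (n + 1)) * (jacobiPoly (a + 1) (b + 1) n).coeff n := by
  have h := natDegree_le_iff_coeff_eq_zero.1 (natDegree_jacobiPoly_le (a + 1) (b + 1) n)
  rw [jacobiPoly_succ, coeff_smul, coeff_jacobiOp_succ, h (n + 1) (by omega),
    h (n + 2) (by omega), smul_eq_mul]
  ring

lemma pow_le_coeff_jacobiPoly {r : ℝ} (hr : 0 ≤ r) (hr' : r ≤ 1 / 2) {a b : ℝ}
    (hab : 2 * r ≤ a + b + 2) (n : ℕ) : r ^ n ≤ (jacobiPoly a b n).coeff n := by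
  induction n generalizing a b with
  | zero => simp
  | succ n ih =>
    rw [coeff_jacobiPoly_succ, pow_succ']
    have hratio : r ≤ (a + b + 2 + n) / (2 * (n + 1)) := by
      rw [le_div_iff₀ (by positivity)]
      nlinarith [n.cast_nonneg (α := ℝ)]
    exact mul_le_mul hratio (ih (by linarith)) (by positivity) (hr.trans hratio)

lemma coeff_jacobiPoly_pos {a b : ℝ} (hab : 0 < a + b + 2) (n : ℕ) :
    0 < (jacobiPoly a b n).coeff n := by
  have hr : 0 < min (1 / 2) ((a + b + 2) / 2) := lt_min (by norm_num) (by linarith)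
  exact (pow_pos hr n).trans_le (pow_le_coeff_jacobiPoly hr.le (min_le_left _ _)
    (by linarith [min_le_right (1 / 2) ((a + b + 2) / 2)]) n)

lemma span_range_jacobiPoly {a b : ℝ} (hab : 0 < a + b + 2) :
    Submodule.span ℝ (Set.range (jacobiPoly a b)) = ⊤ := by
  have hcoeff (n : ℕ) : (jacobiPoly a b n).coeff n ≠ 0 := (coeff_jacobiPoly_pos hab n).ne'
  let S : Polynomial.Sequence ℝ :=
    { elems' := jacobiPoly a b
      degree_eq' := fun n => degree_eq_of_le_of_coeff_ne_zero
        (natDegree_le_iff_degree_le.1 (natDegree_jacobiPoly_le a b n)) (hcoeff n) }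
  exact S.span fun n => (leadingCoeff_ne_zero.2 (S.ne_zero n)).isUnit

lemma coeffNorm_jacobiPoly_le {a b D : ℝ} {n : ℕ} (hD : |a| + |b| + 2 * n ≤ D) :
    coeffNorm (jacobiPoly a b n) ≤ D ^ n / n.factorial := by
  induction n generalizing a b with
  | zero => simp [coeffNorm_one]
  | succ n ih =>
    push_cast at hD
    have ha : |a + 1| ≤ |a| + 1 := by simpa using abs_add_le a 1
    have hb : |b + 1| ≤ |b| + 1 := by simpa using abs_add_le b 1
    have : (0 : ℝ) ≤ n := n.cast_nonneg
    calc coeffNorm (jacobiPoly a b (n + 1))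
        ≤ 1 / (2 * (n + 1)) *
          coeffNorm (jacobiOp (a + 1) (b + 1) (jacobiPoly (a + 1) (b + 1) n)) := by
          rw [jacobiPoly_succ, smul_eq_C_mul]
          refine (coeffNorm_C_mul_le _ _).trans_eq ?_
          rw [Real.norm_eq_abs, abs_div, abs_neg, abs_one, abs_of_nonneg (by positivity)]
      _ ≤ 1 / (2 * (n + 1)) * (2 * D * (D ^ n / n.factorial)) := by
          gcongr
          refine (coeffNorm_jacobiOp_le _ _ (natDegree_jacobiPoly_le _ _ n)).trans ?_
          have hle : |a + 1| + |b + 1| + n ≤ D := by linarith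
          gcongr
          · exact coeffNorm_nonneg _
          · linarith [abs_nonneg a, abs_nonneg b]
          · exact ih (by linarith)
      _ = D ^ (n + 1) / (n + 1).factorial := by
          rw [Nat.factorial_succ, pow_succ']; push_cast; field_simp

lemma abs_eval_jacobiPoly_le (a b : ℝ) (n : ℕ) {x : ℝ} (hx : |x| ≤ 1) :
    |(jacobiPoly a b n).eval x| ≤ exp (|a| + |b| + 2 * n) :=
  (norm_eval_le_coeffNorm _ hx).trans ((coeffNorm_jacobiPoly_le le_rfl).trans
    (Real.pow_div_factorial_le_exp _ (by positivity) n))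

/-- The Jacobi differential operator `(1 - x²) p'' + (b - a - (a + b + 2) x) p'`. -/
noncomputable def jacobiDiff (a b : ℝ) : ℝ[X] →ₗ[ℝ] ℝ[X] :=
  jacobiOp (a + 1) (b + 1) ∘ₗ derivative

lemma jacobiDiff_apply (a b : ℝ) (p : ℝ[X]) :
    jacobiDiff a b p = jacobiOp (a + 1) (b + 1) (derivative p) := rfl

lemma eval_jacobiDiff (a b : ℝ) (p : ℝ[X]) (x : ℝ) :
    (jacobiDiff a b p).eval x = (b - a - (a + b + 2) * x) * (derivative p).eval x +
      (1 - x ^ 2) * (derivative (derivative p)).eval x := by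
  rw [jacobiDiff_apply, eval_jacobiOp]
  ring

/-- The eigenvalue of `-jacobiDiff a b` on the Jacobi polynomial of degree `n`. -/
def jacobiEigenvalue (a b : ℝ) (n : ℕ) : ℝ := n * (n + a + b + 1)

lemma jacobiDiff_jacobiPoly (a b : ℝ) (n : ℕ) :
    jacobiDiff a b (jacobiPoly a b n) = -jacobiEigenvalue a b n • jacobiPoly a b n := by
  induction n generalizing a b with
  | zero => simp [jacobiDiff_apply, jacobiEigenvalue]
  | succ n ih =>
    have hstep : jacobiDiff a b
        (jacobiOp (a + 1) (b + 1) (jacobiPoly (a + 1) (b + 1) n)) =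
        -jacobiEigenvalue a b (n + 1) •
          jacobiOp (a + 1) (b + 1) (jacobiPoly (a + 1) (b + 1) n) := by
      rw [jacobiDiff_apply, derivative_jacobiOp, ← jacobiDiff_apply, ih, ← smul_eq_C_mul,
        ← sub_smul, map_smul]
      congr 1
      simp only [jacobiEigenvalue]
      push_cast
      ring
    rw [jacobiPoly_succ, map_smul, hstep, smul_comm]

end JacobiPolynomial

local notation "𝕀" => Set.Icc (-1 : ℝ) 1

section JacobiWeight

open Polynomial

/-- The Jacobi weight `(1 - x)^a (1 + x)^b`. -/
noncomputable def jacobiWeight (a b x : ℝ) : ℝ := (1 - x) ^ a * (1 + x) ^ b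

lemma jacobiWeight_nonneg (a b : ℝ) {x : ℝ} (hx : x ∈ 𝕀) : 0 ≤ jacobiWeight a b x :=
  mul_nonneg (rpow_nonneg (by linarith [hx.2]) _) (rpow_nonneg (by linarith [hx.1]) _)

lemma jacobiWeight_pos (a b : ℝ) {x : ℝ} (hx : x ∈ Set.Ioo (-1 : ℝ) 1) : 0 < jacobiWeight a b x :=
  mul_pos (rpow_pos_of_pos (by linarith [hx.2]) _) (rpow_pos_of_pos (by linarith [hx.1]) _)

lemma jacobiWeight_add (a b c d : ℝ) {x : ℝ} (hx : x ∈ Set.Ioo (-1 : ℝ) 1) :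
    jacobiWeight (a + c) (b + d) x = jacobiWeight a b x * jacobiWeight c d x := by
  rw [jacobiWeight, rpow_add (by linarith [hx.2]), rpow_add (by linarith [hx.1])]
  exact mul_mul_mul_comm _ _ _ _

lemma jacobiWeight_one_one (x : ℝ) : jacobiWeight 1 1 x = 1 - x ^ 2 := by
  rw [jacobiWeight, rpow_one, rpow_one]
  ring

@[fun_prop]
lemma measurable_jacobiWeight (a b : ℝ) : Measurable (jacobiWeight a b) := by
  unfold jacobiWeight
  fun_prop

lemma continuous_jacobiWeight {a b : ℝ} (ha : 0 ≤ a) (hb : 0 ≤ b) :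
    Continuous (jacobiWeight a b) :=
  ((continuous_const.sub continuous_id).rpow_const fun _ => Or.inr ha).mul
    ((continuous_const.add continuous_id).rpow_const fun _ => Or.inr hb)

lemma intervalIntegrable_jacobiWeight {a b : ℝ} (ha : -1 < a) (hb : -1 < b) :
    IntervalIntegrable (jacobiWeight a b) volume (-1) 1 := by
  have hright : IntervalIntegrable (jacobiWeight a b) volume 0 1 := by
    have h : IntervalIntegrable (fun x : ℝ => (1 - x) ^ a) volume 0 1 := by
      simpa using ((intervalIntegral.intervalIntegrable_rpow' (a := 0) (b := 1) ha).comp_sub_left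
        1).symm
    refine h.mul_continuousOn (ContinuousOn.rpow_const (by fun_prop) fun x hx => Or.inl ?_)
    rw [Set.uIcc_of_le zero_le_one] at hx
    linarith [hx.1]
  have hleft : IntervalIntegrable (jacobiWeight a b) volume (-1) 0 := by
    have h : IntervalIntegrable (fun x : ℝ => (1 + x) ^ b) volume (-1) 0 := by
      simpa using (intervalIntegral.intervalIntegrable_rpow' (a := 0) (b := 1) hb).comp_add_left 1
    refine h.continuousOn_mul (ContinuousOn.rpow_const (by fun_prop) fun x hx => Or.inl ?_)
    rw [Set.uIcc_of_le (by norm_num)] at hx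
    linarith [hx.2]
  exact hleft.trans hright

lemma rpow_eq_rpow_sub_one_mul {x p : ℝ} (h : x ≠ 0 ∨ p ≠ 0) : x ^ p = x ^ (p - 1) * x := by
  rcases eq_or_ne x 0 with rfl | hx
  · rw [zero_rpow (h.resolve_left (not_not.2 rfl)), mul_zero]
  · rw [rpow_sub_one hx, div_mul_cancel₀ _ hx]

lemma hasDerivAt_jacobiWeight_mul {A B x : ℝ} (hA : x ≠ 1 ∨ 1 ≤ A) (hB : x ≠ -1 ∨ 1 ≤ B)
    (R : ℝ[X]) : HasDerivAt (fun x => jacobiWeight A B x * R.eval x)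
      (jacobiWeight (A - 1) (B - 1) x * (jacobiOp A B R).eval x) x := by
  have hA' : 1 - x ≠ 0 ∨ 1 ≤ A := hA.imp_left fun h => sub_ne_zero.2 h.symm
  have hB' : 1 + x ≠ 0 ∨ 1 ≤ B := hB.imp_left fun h h0 => h (by linarith)
  have d1 := ((hasDerivAt_id x).const_sub 1).rpow_const hA'
  have d2 := ((hasDerivAt_id x).const_add 1).rpow_const hB'
  refine ((d1.mul d2).mul (R.hasDerivAt x)).congr_deriv ?_
  simp only [id, jacobiWeight, eval_jacobiOp, Pi.mul_apply]
  rw [rpow_eq_rpow_sub_one_mul (hA'.imp_right fun h => (one_pos.trans_le h).ne'),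
    rpow_eq_rpow_sub_one_mul (p := B) (hB'.imp_right fun h => (one_pos.trans_le h).ne')]
  ring

end JacobiWeight

section JacobiMeasure

/-- The Jacobi measure `(1 - x)^a (1 + x)^b dx`, as a measure on the compact space `[-1, 1]`. -/
noncomputable def jacobiMeasure (a b : ℝ) : Measure 𝕀 :=
  ((volume : Measure ℝ).comap Subtype.val).withDensity fun x => ENNReal.ofReal (jacobiWeight a b x)

lemma integral_jacobiMeasure (a b : ℝ) (f : ℝ → ℝ) :
    ∫ x : 𝕀, f x ∂jacobiMeasure a b = ∫ x in (-1)..1, jacobiWeight a b x * f x := by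
  rw [jacobiMeasure, integral_withDensity_eq_integral_toReal_smul (by fun_prop)
    (by simp), intervalIntegral.integral_of_le (by norm_num), ← integral_Icc_eq_integral_Ioc,
    ← integral_subtype_comap measurableSet_Icc]
  congr with x
  rw [ENNReal.toReal_ofReal (jacobiWeight_nonneg a b x.2), smul_eq_mul]

lemma isFiniteMeasure_jacobiMeasure {a b : ℝ} (ha : -1 < a) (hb : -1 < b) :
    IsFiniteMeasure (jacobiMeasure a b) := by
  have h : IntegrableOn (jacobiWeight a b) 𝕀 := by
    rw [integrableOn_Icc_iff_integrableOn_Ioc]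
    exact (intervalIntegrable_jacobiWeight ha hb).1
  exact isFiniteMeasure_withDensity_ofReal
    ((integrableOn_iff_comap_subtypeVal measurableSet_Icc).1 h).hasFiniteIntegral

lemma ae_mem_Ioo : ∀ᵐ x : 𝕀 ∂volume.comap Subtype.val, (x : ℝ) ∈ Set.Ioo (-1 : ℝ) 1 := by
  have h : ∀ᵐ x ∂volume.restrict 𝕀, x ∈ Set.Ioo (-1 : ℝ) 1 := by
    rw [← restrict_Ioo_eq_restrict_Icc]
    exact ae_restrict_mem measurableSet_Ioo
  exact (ae_restrict_iff_subtype measurableSet_Icc).1 h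

instance isOpenPosMeasure_jacobiMeasure (a b : ℝ) : (jacobiMeasure a b).IsOpenPosMeasure where
  open_pos U hU := by
    rintro ⟨x, hxU⟩ hzero
    obtain ⟨V, hV, rfl⟩ := isOpen_induced_iff.1 hU
    have hclos : (x : ℝ) ∈ closure (Set.Ioo (-1 : ℝ) 1) := by
      rw [closure_Ioo (by norm_num)]
      exact x.2
    have hpos := (hV.inter isOpen_Ioo).measure_pos volume (mem_closure_iff.1 hclos V hV hxU)
    have hnull : ∀ᵐ x : 𝕀 ∂volume.comap Subtype.val, (x : ℝ) ∉ V ∩ Set.Ioo (-1 : ℝ) 1 := by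
      rw [jacobiMeasure, withDensity_apply_eq_zero (by fun_prop)] at hzero
      refine (measure_eq_zero_iff_ae_notMem.1 hzero).mono fun x hx hxV => hx ⟨?_, hxV.1⟩
      exact (ENNReal.ofReal_pos.2 (jacobiWeight_pos a b hxV.2)).ne'
    have := (ae_restrict_iff_subtype (p := fun x => x ∉ V ∩ Set.Ioo (-1 : ℝ) 1)
      measurableSet_Icc).2 hnull
    rw [← measure_eq_zero_iff_ae_notMem, Measure.restrict_eq_self _
      (Set.inter_subset_right.trans Set.Ioo_subset_Icc_self)] at this
    exact hpos.ne' this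

lemma jacobiMeasure_add (a b c d : ℝ) : jacobiMeasure (a + c) (b + d) =
    (jacobiMeasure a b).withDensity fun x => ENNReal.ofReal (jacobiWeight c d x) := by
  rw [jacobiMeasure, jacobiMeasure, ← withDensity_mul _ (by fun_prop) (by fun_prop)]
  refine withDensity_congr_ae (ae_mem_Ioo.mono fun x hx => ?_)
  simp only [Pi.mul_apply, jacobiWeight_add a b c d hx,
    ENNReal.ofReal_mul (jacobiWeight_nonneg a b x.2)]

lemma integral_jacobiMeasure_add (a b c d : ℝ) (f : 𝕀 → ℝ) :
    ∫ x, f x ∂jacobiMeasure (a + c) (b + d) =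
      ∫ x, jacobiWeight c d x * f x ∂jacobiMeasure a b := by
  rw [jacobiMeasure_add, integral_withDensity_eq_integral_toReal_smul (by fun_prop) (by simp)]
  congr with x
  rw [ENNReal.toReal_ofReal (jacobiWeight_nonneg c d x.2), smul_eq_mul]

end JacobiMeasure

lemma integrable_of_continuous {X E : Type*} [TopologicalSpace X] [CompactSpace X]
    [MeasurableSpace X] [OpensMeasurableSpace X] [NormedAddCommGroup E] {μ : Measure X}
    [IsFiniteMeasure μ] {f : X → E} (hf : Continuous f) : Integrable f μ :=
  hf.integrable_of_hasCompactSupport (HasCompactSupport.of_compactSpace f)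

section Orthogonality

open Polynomial

variable {a b : ℝ}

lemma integrable_eval_jacobiMeasure (ha : -1 < a) (hb : -1 < b) (p : ℝ[X]) :
    Integrable (fun x : 𝕀 => p.eval (x : ℝ)) (jacobiMeasure a b) :=
  have := isFiniteMeasure_jacobiMeasure ha hb
  integrable_of_continuous (by fun_prop)

lemma integral_jacobiMeasure_add_one (a b : ℝ) (f : 𝕀 → ℝ) :
    ∫ x, f x ∂jacobiMeasure (a + 1) (b + 1) =
      ∫ x, (1 - (x : ℝ) ^ 2) * f x ∂jacobiMeasure a b := by
  simp only [integral_jacobiMeasure_add, jacobiWeight_one_one]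

lemma integral_jacobiOp (ha : -1 < a) (hb : -1 < b) (R : ℝ[X]) :
    ∫ x : 𝕀, (jacobiOp (a + 1) (b + 1) R).eval (x : ℝ) ∂jacobiMeasure a b = 0 := by
  have ha' : 0 < a + 1 := by linarith
  have hb' : 0 < b + 1 := by linarith
  have h := intervalIntegral.integral_eq_sub_of_hasDerivAt_of_le (a := -1) (b := 1) (by norm_num)
    ((continuous_jacobiWeight ha'.le hb'.le).mul R.continuous).continuousOn
    (fun x hx => hasDerivAt_jacobiWeight_mul (Or.inl hx.2.ne) (Or.inl hx.1.ne') R)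
    (by
      simpa only [add_sub_cancel_right] using
        (intervalIntegrable_jacobiWeight ha hb).mul_continuousOn
          (jacobiOp (a + 1) (b + 1) R).continuous.continuousOn)
  simp only [add_sub_cancel_right] at h
  rw [integral_jacobiMeasure a b fun x => (jacobiOp (a + 1) (b + 1) R).eval x, h]
  simp [jacobiWeight, zero_rpow ha'.ne', zero_rpow hb'.ne']

lemma integral_jacobiOp_mul (ha : -1 < a) (hb : -1 < b) (R Q : ℝ[X]) :
    ∫ x : 𝕀, (jacobiOp (a + 1) (b + 1) R * Q).eval (x : ℝ) ∂jacobiMeasure a b =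
      -∫ x : 𝕀, (R * derivative Q).eval (x : ℝ) ∂jacobiMeasure (a + 1) (b + 1) := by
  have h := integral_jacobiOp ha hb (R * Q)
  simp only [jacobiOp_mul, eval_add] at h
  rw [integral_add (integrable_eval_jacobiMeasure ha hb _)
    (integrable_eval_jacobiMeasure ha hb _)] at h
  rw [integral_jacobiMeasure_add_one, eq_neg_iff_add_eq_zero, ← h]
  simp

lemma integral_jacobiDiff_mul_comm (ha : -1 < a) (hb : -1 < b) (p q : ℝ[X]) :
    ∫ x : 𝕀, (jacobiDiff a b p * q).eval (x : ℝ) ∂jacobiMeasure a b =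
      ∫ x : 𝕀, (p * jacobiDiff a b q).eval (x : ℝ) ∂jacobiMeasure a b := by
  rw [mul_comm p, jacobiDiff_apply, jacobiDiff_apply, integral_jacobiOp_mul ha hb,
    integral_jacobiOp_mul ha hb, mul_comm (derivative p)]

lemma integral_jacobiPoly_mul (ha : -1 < a) (hb : -1 < b) (n : ℕ) (q : ℝ[X]) :
    ∫ x : 𝕀, (jacobiPoly a b n * q).eval (x : ℝ) ∂jacobiMeasure a b =
      1 / (2 ^ n * n.factorial) *
        ∫ x : 𝕀, ((1 - X ^ 2) ^ n * derivative^[n] q).eval (x : ℝ) ∂jacobiMeasure a b := by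
  induction n generalizing a b q with
  | zero => simp
  | succ n ih =>
    have hcoef : 1 / (2 * (n + 1)) * (1 / (2 ^ n * n.factorial)) =
        (1 / (2 ^ (n + 1) * (n + 1).factorial) : ℝ) := by
      rw [Nat.factorial_succ, pow_succ]; push_cast; field_simp
    simp only [jacobiPoly_succ, smul_mul_assoc, eval_smul, smul_eq_mul]
    rw [integral_const_mul, integral_jacobiOp_mul ha hb, neg_div, neg_mul_neg,
      ih (by linarith) (by linarith), ← mul_assoc, hcoef, integral_jacobiMeasure_add_one,
      Function.iterate_succ_apply]
    simp only [pow_succ' (1 - X ^ 2 : ℝ[X]), eval_mul, eval_sub, eval_one, eval_pow, eval_X,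
      mul_assoc]

lemma integral_jacobiPoly_mul_of_natDegree_lt (ha : -1 < a) (hb : -1 < b) {n : ℕ} {q : ℝ[X]}
    (hq : q.natDegree < n) :
    ∫ x : 𝕀, (jacobiPoly a b n * q).eval (x : ℝ) ∂jacobiMeasure a b = 0 := by
  rw [integral_jacobiPoly_mul ha hb, iterate_derivative_eq_zero hq]
  simp

lemma integral_jacobiPoly_mul_jacobiPoly_of_ne (ha : -1 < a) (hb : -1 < b) {m n : ℕ}
    (h : m ≠ n) :
    ∫ x : 𝕀, (jacobiPoly a b m * jacobiPoly a b n).eval (x : ℝ) ∂jacobiMeasure a b = 0 := by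
  rcases h.lt_or_gt with h | h
  · rw [mul_comm]
    exact integral_jacobiPoly_mul_of_natDegree_lt ha hb ((natDegree_jacobiPoly_le a b m).trans_lt h)
  · exact integral_jacobiPoly_mul_of_natDegree_lt ha hb ((natDegree_jacobiPoly_le a b n).trans_lt h)

/-- The squared `L²` norm of the Jacobi polynomial of degree `n`. -/
noncomputable def jacobiNormSq (a b : ℝ) (n : ℕ) : ℝ :=
  ∫ x : 𝕀, (jacobiPoly a b n * jacobiPoly a b n).eval (x : ℝ) ∂jacobiMeasure a b

lemma iterate_derivative_of_natDegree_le {R : Type*} [Semiring R] {p : R[X]} {n : ℕ}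
    (hp : p.natDegree ≤ n) : derivative^[n] p = C (n.factorial * p.coeff n) := by
  ext m
  rw [coeff_iterate_derivative, coeff_C]
  split_ifs with h
  · rw [h, zero_add, Nat.descFactorial_self, nsmul_eq_mul]
  · rw [natDegree_le_iff_coeff_eq_zero.1 hp (m + n) (by omega), smul_zero]

lemma jacobiNormSq_eq (ha : -1 < a) (hb : -1 < b) (n : ℕ) :
    jacobiNormSq a b n = (jacobiPoly a b n).coeff n / 2 ^ n *
      ∫ x : 𝕀, (1 - (x : ℝ) ^ 2) ^ n ∂jacobiMeasure a b := by
  rw [jacobiNormSq, integral_jacobiPoly_mul ha hb,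
    iterate_derivative_of_natDegree_le (natDegree_jacobiPoly_le a b n)]
  simp only [eval_mul, eval_C, eval_pow, eval_sub, eval_one, eval_X]
  rw [integral_mul_const]
  have := n.factorial_ne_zero
  field_simp

lemma exists_mul_pow_le_jacobiNormSq (ha : -1 < a) (hb : -1 < b) :
    ∃ c > 0, ∃ r > 0, ∀ n, c * r ^ n ≤ jacobiNormSq a b n := by
  have := isFiniteMeasure_jacobiMeasure ha hb
  set r := min (1 / 2) ((a + b + 2) / 2)
  have hr0 : 0 < r := lt_min (by norm_num) (by linarith)
  set c := (jacobiMeasure a b).real {x | (3 / 4 : ℝ) < 1 - (x : ℝ) ^ 2}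
  have hc0 : 0 < c := by
    refine ENNReal.toReal_pos (IsOpen.measure_pos _ (isOpen_lt (by fun_prop) (by fun_prop))
      ⟨⟨0, by norm_num⟩, ?_⟩).ne' (measure_ne_top _ _)
    norm_num
  refine ⟨c, hc0, r / 2 * (3 / 4), by positivity, fun n => ?_⟩
  have hmass : (3 / 4) ^ n * c ≤ ∫ x : 𝕀, (1 - (x : ℝ) ^ 2) ^ n ∂jacobiMeasure a b := by
    have hnonneg (x : 𝕀) : (0 : ℝ) ≤ (1 - (x : ℝ) ^ 2) ^ n :=
      pow_nonneg (by nlinarith [x.2.1, x.2.2]) n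
    refine le_trans ?_ (mul_meas_ge_le_integral_of_nonneg (ae_of_all _ hnonneg)
      (integrable_of_continuous (by fun_prop)) ((3 / 4) ^ n))
    gcongr
    refine measureReal_mono fun x hx => ?_
    exact pow_le_pow_left₀ (by norm_num) (show (3 / 4 : ℝ) < 1 - (x : ℝ) ^ 2 from hx).le n
  rw [jacobiNormSq_eq ha hb]
  calc c * (r / 2 * (3 / 4)) ^ n = r ^ n / 2 ^ n * ((3 / 4) ^ n * c) := by
        rw [mul_pow, div_pow]; ring
    _ ≤ _ := by
        have hr' : 2 * r ≤ a + b + 2 := by linarith [min_le_right (1 / 2) ((a + b + 2) / 2)]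
        have hcoeff := pow_le_coeff_jacobiPoly hr0.le (min_le_left _ _) hr' n
        have := (coeff_jacobiPoly_pos (by linarith : 0 < a + b + 2) n).le
        gcongr

lemma jacobiNormSq_pos (ha : -1 < a) (hb : -1 < b) (n : ℕ) : 0 < jacobiNormSq a b n := by
  obtain ⟨c, hc, r, hr, h⟩ := exists_mul_pow_le_jacobiNormSq ha hb
  exact (by positivity : 0 < c * r ^ n).trans_le (h n)

end Orthogonality

section MaximumPrinciple

lemma sub_mul_nonneg_of_isMinOn {f : ℝ → ℝ} {f' x₀ y : ℝ} {s : Set ℝ} (hs : Convex ℝ s)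
    (hx : x₀ ∈ s) (hy : y ∈ s) (hf : HasDerivAt f f' x₀) (hmin : IsMinOn f s x₀) :
    0 ≤ (y - x₀) * f' := by
  simpa using hmin.localize.hasFDerivWithinAt_nonneg hf.hasFDerivAt.hasFDerivWithinAt
    (sub_mem_posTangentConeAt_of_segment_subset (hs.segment_subset hx hy))

lemma deriv_deriv_nonneg_of_isLocalMin {f : ℝ → ℝ} {x₀ : ℝ} (hmin : IsLocalMin f x₀)
    (hf : ContinuousAt f x₀) : 0 ≤ deriv (deriv f) x₀ := by
  by_contra! hneg
  have hmax : IsLocalMax f x₀ := isLocalMax_of_deriv_deriv_neg hneg hmin.deriv_eq_zero hf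
  have hconst : f =ᶠ[nhds x₀] fun _ => f x₀ := by
    filter_upwards [hmin, hmax] with x h1 h2 using le_antisymm h2 h1
  exact hneg.ne (by rw [hconst.deriv.deriv_eq]; simp)

lemma nonneg_of_hasDerivAt_of_nonneg_at_min {X : Type*} [TopologicalSpace X] [CompactSpace X]
    {u v : ℝ → X → ℝ} (hu : Continuous fun z : ℝ × X => u z.1 z.2)
    (hd : ∀ s x, HasDerivAt (fun s => u s x) (v s x) s)
    (hv : ∀ s x, (∀ y, u s x ≤ u s y) → 0 ≤ v s x) (h0 : ∀ x, 0 ≤ u 0 x) {t : ℝ} (ht : 0 ≤ t)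
    (x : X) : 0 ≤ u t x := by
  -- A small linear growth in time makes a negative value at a positive time impossible.
  have hperturbed (η : ℝ) (hη : 0 < η) : 0 ≤ u t x + η * t := by
    obtain ⟨⟨s, y⟩, ⟨hs, -⟩, hmin⟩ := ((isCompact_Icc (a := 0) (b := t)).prod
      (isCompact_univ (X := X))).exists_isMinOn ⟨(0, x), ⟨le_rfl, ht⟩, Set.mem_univ _⟩
      (hu.add (by fun_prop : Continuous fun z : ℝ × X => η * z.1)).continuousOn
    have hmin' (s') (hs' : s' ∈ Set.Icc 0 t) (y') : u s y + η * s ≤ u s' y' + η * s' :=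
      hmin (Set.mk_mem_prod hs' (Set.mem_univ y'))
    refine le_trans ?_ (hmin' t ⟨ht, le_rfl⟩ x)
    rcases hs.1.eq_or_lt with hs0 | hs0
    · obtain rfl : 0 = s := hs0
      simpa using h0 y
    · have htime : 0 ≤ (0 - s) * (v s y + η * 1) :=
        sub_mul_nonneg_of_isMinOn (convex_Icc 0 t) hs (Set.left_mem_Icc.2 ht)
          ((hd s y).add ((hasDerivAt_id s).const_mul η)) fun s' hs' => hmin' s' hs' y
      have hspace : 0 ≤ v s y := hv s y fun y' => by simpa using hmin' s hs y'
      nlinarith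
  have hlim : Filter.Tendsto (fun η : ℝ => u t x + η * t) (nhdsWithin 0 (Set.Ioi 0))
      (nhds (u t x)) := by
    simpa using ((by fun_prop : Continuous fun η : ℝ => u t x + η * t).tendsto 0).mono_left
      nhdsWithin_le_nhds
  exact ge_of_tendsto hlim (eventually_mem_nhdsWithin.mono hperturbed)

end MaximumPrinciple

lemma hasDerivAt_integral_of_continuous {X E : Type*} [TopologicalSpace X] [CompactSpace X]
    [MeasurableSpace X] [OpensMeasurableSpace X] [NormedAddCommGroup E] [NormedSpace ℝ E]
    {μ : Measure X} [IsFiniteMeasure μ] {F F' : ℝ → X → E} (hF : ∀ s, Continuous (F s))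
    (hF' : Continuous fun z : ℝ × X => F' z.1 z.2)
    (hd : ∀ s x, HasDerivAt (fun s => F s x) (F' s x) s) (s : ℝ) :
    HasDerivAt (fun s => ∫ x, F s x ∂μ) (∫ x, F' s x ∂μ) s := by
  obtain ⟨M, hM⟩ := ((isCompact_closedBall s 1).prod
    (isCompact_univ (X := X))).exists_bound_of_continuousOn hF'.continuousOn
  have hcont (s) : Continuous (F' s) := hF'.comp (by fun_prop : Continuous fun x => (s, x))
  refine (hasDerivAt_integral_of_dominated_loc_of_deriv_le (Metric.closedBall_mem_nhds s one_pos)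
    (.of_forall fun s => (integrable_of_continuous (hF s)).aestronglyMeasurable)
    (integrable_of_continuous (hF s)) (integrable_of_continuous (hcont s)).aestronglyMeasurable
    (.of_forall fun x s' hs' => hM (s', x) (Set.mk_mem_prod hs' (Set.mem_univ x)))
    (integrable_const M) (.of_forall fun x s' _ => hd s' x)).2

section JacobiFlow

open Polynomial

variable {a b : ℝ}

lemma eval_jacobiDiff_nonneg_of_isMinOn (ha : -1 ≤ a) (hb : -1 ≤ b) {p : ℝ[X]} {x₀ : ℝ}
    (hx : x₀ ∈ 𝕀) (hmin : IsMinOn (fun x => p.eval x) 𝕀 x₀) : 0 ≤ (jacobiDiff a b p).eval x₀ := by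
  have hright : 0 ≤ (1 - x₀) * (derivative p).eval x₀ := sub_mul_nonneg_of_isMinOn
    (convex_Icc _ _) hx (Set.right_mem_Icc.2 (by norm_num)) (p.hasDerivAt x₀) hmin
  have hleft : 0 ≤ (-1 - x₀) * (derivative p).eval x₀ := sub_mul_nonneg_of_isMinOn
    (convex_Icc _ _) hx (Set.left_mem_Icc.2 (by norm_num)) (p.hasDerivAt x₀) hmin
  have hsecond : 0 ≤ (1 - x₀ ^ 2) * (derivative (derivative p)).eval x₀ := by
    by_cases hx' : x₀ ∈ Set.Ioo (-1 : ℝ) 1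
    · have h := deriv_deriv_nonneg_of_isLocalMin (hmin.isLocalMin (Icc_mem_nhds hx'.1 hx'.2))
        p.continuousAt
      rw [show deriv (fun x => p.eval x) = fun x => (derivative p).eval x from
        funext fun _ => p.deriv, Polynomial.deriv] at h
      exact mul_nonneg (by nlinarith [hx.1, hx.2]) h
    · have hsq : 1 - x₀ ^ 2 = 0 := by
        rcases Set.eq_endpoints_or_mem_Ioo_of_mem_Icc hx with rfl | rfl | h
        · norm_num
        · norm_num
        · exact absurd h hx'
      rw [hsq, zero_mul]
  rw [eval_jacobiDiff]
  have hleft' := mul_nonneg (by linarith : 0 ≤ a + 1) hleft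
  have hright' := mul_nonneg (by linarith : 0 ≤ b + 1) hright
  linarith

/-- The coefficient of `P_n` in the expansion of `p` in Jacobi polynomials. -/
noncomputable def jacobiCoeff (a b : ℝ) (p : ℝ[X]) (n : ℕ) : ℝ :=
  (∫ x : 𝕀, (jacobiPoly a b n * p).eval (x : ℝ) ∂jacobiMeasure a b) / jacobiNormSq a b n

/-- The solution `exp(s L) p` of the Jacobi heat equation `∂u/∂s = L u` with initial value `p`. -/
noncomputable def jacobiFlow (a b : ℝ) (p : ℝ[X]) (s : ℝ) : ℝ[X] :=
  ∑ n ∈ Finset.range (p.natDegree + 1),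
    (exp (-jacobiEigenvalue a b n * s) * jacobiCoeff a b p n) • jacobiPoly a b n

lemma jacobiCoeff_of_natDegree_lt (ha : -1 < a) (hb : -1 < b) {p : ℝ[X]} {n : ℕ}
    (hp : p.natDegree < n) : jacobiCoeff a b p n = 0 := by
  rw [jacobiCoeff, integral_jacobiPoly_mul_of_natDegree_lt ha hb hp, zero_div]

lemma jacobiCoeff_finsuppSum (ha : -1 < a) (hb : -1 < b) (c : ℕ →₀ ℝ) (n : ℕ) :
    jacobiCoeff a b (c.sum fun k r => r • jacobiPoly a b k) n = c n := by
  simp only [jacobiCoeff, Finsupp.sum, Finset.mul_sum, eval_finsetSum, mul_smul_comm, eval_smul,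
    smul_eq_mul]
  rw [integral_finsetSum _ fun k _ => (integrable_eval_jacobiMeasure ha hb _).const_mul _,
    div_eq_iff (jacobiNormSq_pos ha hb n).ne', Finset.sum_eq_single n]
  · rw [integral_const_mul, jacobiNormSq]
  · intro k _ hk
    rw [integral_const_mul, integral_jacobiPoly_mul_jacobiPoly_of_ne ha hb hk.symm, mul_zero]
  · intro hn
    simp [Finsupp.notMem_support_iff.1 hn]

lemma jacobiFlow_zero (ha : -1 < a) (hb : -1 < b) (p : ℝ[X]) : jacobiFlow a b p 0 = p := by
  obtain ⟨c, hc⟩ := Finsupp.mem_span_range_iff_exists_finsupp.1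
    ((span_range_jacobiPoly (by linarith : 0 < a + b + 2)).symm ▸ Submodule.mem_top : p ∈ _)
  have hcoeff (n) : jacobiCoeff a b p n = c n := by rw [← hc, jacobiCoeff_finsuppSum ha hb]
  have hsupp : c.support ⊆ Finset.range (p.natDegree + 1) := fun n hn => by
    by_contra h
    rw [Finsupp.mem_support_iff, ← hcoeff] at hn
    exact hn (jacobiCoeff_of_natDegree_lt ha hb (by simpa using h))
  simp only [jacobiFlow, mul_zero, exp_zero, one_mul, hcoeff]
  rw [← Finsupp.sum_of_support_subset c hsupp (fun n r => r • jacobiPoly a b n) (by simp), hc]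

lemma hasDerivAt_eval_jacobiFlow (a b : ℝ) (p : ℝ[X]) (s x : ℝ) :
    HasDerivAt (fun s => (jacobiFlow a b p s).eval x)
      ((jacobiDiff a b (jacobiFlow a b p s)).eval x) s := by
  simp only [jacobiFlow, map_sum, map_smul, jacobiDiff_jacobiPoly, eval_finsetSum, eval_smul,
    smul_eq_mul]
  refine HasDerivAt.fun_sum fun n _ => ?_
  refine ((((hasDerivAt_id s).const_mul (-jacobiEigenvalue a b n)).exp.mul_const
    (jacobiCoeff a b p n)).mul_const ((jacobiPoly a b n).eval x)).congr_deriv ?_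
  simp only [id]
  ring

lemma continuous_eval_map_jacobiFlow (a b : ℝ) (p : ℝ[X]) (T : ℝ[X] →ₗ[ℝ] ℝ[X]) :
    Continuous fun z : ℝ × ℝ => (T (jacobiFlow a b p z.1)).eval z.2 := by
  simp only [jacobiFlow, map_sum, map_smul, eval_finsetSum, eval_smul, smul_eq_mul]
  fun_prop

lemma eval_jacobiFlow_nonneg (ha : -1 < a) (hb : -1 < b) {p : ℝ[X]}
    (hp : ∀ x ∈ 𝕀, 0 ≤ p.eval x) {t : ℝ} (ht : 0 ≤ t) {x : ℝ} (hx : x ∈ 𝕀) :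
    0 ≤ (jacobiFlow a b p t).eval x := by
  refine nonneg_of_hasDerivAt_of_nonneg_at_min
    (u := fun s (x : 𝕀) => (jacobiFlow a b p s).eval (x : ℝ))
    ((continuous_eval_map_jacobiFlow a b p .id).comp (by fun_prop :
      Continuous fun z : ℝ × 𝕀 => (z.1, (z.2 : ℝ))))
    (fun s x => hasDerivAt_eval_jacobiFlow a b p s x) ?_ ?_ ht ⟨x, hx⟩
  · exact fun s x hmin => eval_jacobiDiff_nonneg_of_isMinOn ha.le hb.le x.2
      fun y hy => hmin ⟨y, hy⟩
  · intro x
    rw [jacobiFlow_zero ha hb]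
    exact hp x x.2

end JacobiFlow

section JacobiComparison

open Polynomial

lemma jacobiDiff_add (A B e d : ℝ) (p : ℝ[X]) :
    jacobiDiff (A + e) (B + d) p = jacobiDiff A B p + jacobiOp e d 1 * derivative p := by
  simp only [jacobiDiff_apply, jacobiOp_apply, derivative_one, C_add, C_sub]
  ring

lemma jacobiDiff_sub (A B e d : ℝ) (p : ℝ[X]) :
    jacobiDiff (A - e) (B - d) p = jacobiDiff A B p - jacobiOp e d 1 * derivative p := by
  rw [eq_sub_iff_add_eq, ← jacobiDiff_add, sub_add_cancel, sub_add_cancel]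

lemma eval_jacobiOp_jacobiOp_one (A B e d x : ℝ) :
    (jacobiOp A B (jacobiOp e d 1)).eval x =
      2 * (B * d) * (1 - x) + 2 * (A * e) * (1 + x) - (e + d) * (A + B + 1) * (1 - x ^ 2) := by
  rw [eval_jacobiOp, derivative_jacobiOp, eval_jacobiOp]
  simp only [derivative_one, map_zero, eval_sub, eval_mul, eval_C, eval_one, eval_zero]
  ring

variable {A B e d : ℝ}

lemma integral_jacobiOp_one_mul_derivative_le (hA : 0 ≤ A) (hB : 0 ≤ B) (he : 0 ≤ e) (hd : 0 ≤ d)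
    {w : ℝ[X]} (hw : ∀ x ∈ 𝕀, 0 ≤ w.eval x) :
    ∫ x : 𝕀, (jacobiOp e d 1 * derivative w - C ((e + d) * (A + B + 1)) * w).eval (x : ℝ)
      ∂jacobiMeasure A B ≤ 0 := by
  set φ : ℝ[X] := jacobiOp e d 1 * derivative w - C ((e + d) * (A + B + 1)) * w with hφ
  have hderiv (x : ℝ) (hx : x ∈ Set.Ioo (-1 : ℝ) 1) : jacobiWeight A B x * φ.eval x ≤
      jacobiWeight (A - 1) (B - 1) x * (jacobiOp A B (jacobiOp e d 1 * w)).eval x := by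
    have hx' := Set.Ioo_subset_Icc_self hx
    have hsplit := jacobiWeight_add (A - 1) (B - 1) 1 1 hx
    rw [sub_add_cancel, sub_add_cancel, jacobiWeight_one_one] at hsplit
    have hdrift : 0 ≤ (2 * (B * d) * (1 - x) + 2 * (A * e) * (1 + x)) * w.eval x := by
      have : 0 ≤ 1 - x := by linarith [hx.2]
      have : 0 ≤ 1 + x := by linarith [hx.1]
      have := hw x hx'
      positivity
    rw [hsplit, mul_assoc]
    refine mul_le_mul_of_nonneg_left ?_ (jacobiWeight_nonneg _ _ hx')
    simp only [hφ, jacobiOp_mul, eval_add, eval_sub, eval_mul, eval_C, eval_one, eval_pow, eval_X,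
      eval_jacobiOp_jacobiOp_one]
    linarith
  have hint := (intervalIntegrable_jacobiWeight (by linarith : -1 < A)
    (by linarith : -1 < B)).mul_continuousOn φ.continuous.continuousOn
  have h := intervalIntegral.integral_le_sub_of_hasDeriv_right_of_le (by norm_num)
    ((continuous_jacobiWeight hA hB).mul (jacobiOp e d 1 * w).continuous).continuousOn
    (fun x hx => (hasDerivAt_jacobiWeight_mul (Or.inl hx.2.ne) (Or.inl hx.1.ne')
      (jacobiOp e d 1 * w)).hasDerivWithinAt)
    ((intervalIntegrable_iff_integrableOn_Icc_of_le (by norm_num)).1 hint) hderiv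
  rw [integral_jacobiMeasure A B fun x => φ.eval x]
  refine h.trans ?_
  have hright : (1 : ℝ) ∈ 𝕀 := by norm_num
  have hleft : (-1 : ℝ) ∈ 𝕀 := by norm_num
  have h1 := mul_nonneg (jacobiWeight_nonneg A B hright) (mul_nonneg he (hw 1 hright))
  have h2 := mul_nonneg (jacobiWeight_nonneg A B hleft) (mul_nonneg hd (hw (-1) hleft))
  simp only [Pi.mul_apply, eval_mul, eval_jacobiOp, derivative_one, eval_one, eval_zero]
  linarith

lemma integral_jacobiDiff_comparison_nonpos (hA : 0 ≤ A) (hB : 0 ≤ B) (he : 0 ≤ e) (hd : 0 ≤ d)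
    {u v : ℝ[X]} (hu : ∀ x ∈ 𝕀, 0 ≤ u.eval x) (hv : ∀ x ∈ 𝕀, 0 ≤ v.eval x) :
    ∫ x : 𝕀, (u * jacobiDiff (A + e) (B + d) v - jacobiDiff (A - e) (B - d) u * v -
      C ((e + d) * (A + B + 1)) * (u * v)).eval (x : ℝ) ∂jacobiMeasure A B ≤ 0 := by
  have hA' : -1 < A := by linarith
  have hB' : -1 < B := by linarith
  have hdrift := integral_jacobiOp_one_mul_derivative_le hA hB he hd (w := u * v)
    fun x hx => by rw [eval_mul]; exact mul_nonneg (hu x hx) (hv x hx)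
  have hsymm := integral_jacobiDiff_mul_comm hA' hB' u v
  have hsplit : u * jacobiDiff (A + e) (B + d) v - jacobiDiff (A - e) (B - d) u * v -
      C ((e + d) * (A + B + 1)) * (u * v) = u * jacobiDiff A B v - jacobiDiff A B u * v +
        (jacobiOp e d 1 * derivative (u * v) - C ((e + d) * (A + B + 1)) * (u * v)) := by
    rw [jacobiDiff_add, jacobiDiff_sub, derivative_mul]
    ring
  have hI := integrable_eval_jacobiMeasure hA' hB'
  simp only [hsplit, eval_add (p := u * jacobiDiff A B v - jacobiDiff A B u * v)]
  rw [integral_add (hI _) (hI _)]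
  simp only [eval_sub (p := u * jacobiDiff A B v)]
  rwa [integral_sub (hI _) (hI _), hsymm, sub_self, zero_add]

lemma hasDerivAt_integral_exp_mul_jacobiFlow_mul_jacobiFlow (a b a' b' κ t s : ℝ) (p q : ℝ[X])
    (μ : Measure 𝕀) [IsFiniteMeasure μ] :
    HasDerivAt (fun s => ∫ x : 𝕀, exp (-κ * s) *
        (jacobiFlow a b p (t - s) * jacobiFlow a' b' q s).eval (x : ℝ) ∂μ)
      (∫ x : 𝕀, exp (-κ * s) * (jacobiFlow a b p (t - s) * jacobiDiff a' b' (jacobiFlow a' b' q s) -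
        jacobiDiff a b (jacobiFlow a b p (t - s)) * jacobiFlow a' b' q s -
        C κ * (jacobiFlow a b p (t - s) * jacobiFlow a' b' q s)).eval (x : ℝ) ∂μ) s := by
  apply hasDerivAt_integral_of_continuous
    (F := fun s (x : 𝕀) => exp (-κ * s) *
      (jacobiFlow a b p (t - s) * jacobiFlow a' b' q s).eval (x : ℝ))
    (fun s => by fun_prop) ?_ (fun s x => ?_) s
  · have hu (T) := (continuous_eval_map_jacobiFlow a b p T).comp
      (by fun_prop : Continuous fun z : ℝ × 𝕀 => (t - z.1, (z.2 : ℝ)))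
    have hv (T) := (continuous_eval_map_jacobiFlow a' b' q T).comp
      (by fun_prop : Continuous fun z : ℝ × 𝕀 => (z.1, (z.2 : ℝ)))
    simp only [eval_sub, eval_mul, eval_C]
    exact (by fun_prop : Continuous fun z : ℝ × 𝕀 => exp (-κ * z.1)).mul
      ((((hu .id).mul (hv (jacobiDiff a' b'))).sub ((hu (jacobiDiff a b)).mul (hv .id))).sub
        (continuous_const.mul ((hu .id).mul (hv .id))))
  · have hu := (hasDerivAt_eval_jacobiFlow a b p (t - s) x).comp s
      ((hasDerivAt_id s).const_sub t)
    have hv := hasDerivAt_eval_jacobiFlow a' b' q s x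
    simp only [eval_sub, eval_mul, eval_C]
    refine ((((hasDerivAt_id s).const_mul (-κ)).exp).mul (hu.mul hv)).congr_deriv ?_
    simp only [id, Function.comp_apply, Pi.mul_apply]
    ring

lemma exp_mul_integral_mul_jacobiFlow_le (hA : 0 ≤ A) (hB : 0 ≤ B) (he : 0 ≤ e) (hd : 0 ≤ d)
    (ha : -1 < A - e) (hb : -1 < B - d) {p q : ℝ[X]} (hp : ∀ x ∈ 𝕀, 0 ≤ p.eval x)
    (hq : ∀ x ∈ 𝕀, 0 ≤ q.eval x) {t : ℝ} (ht : 0 ≤ t) :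
    exp (-((e + d) * (A + B + 1)) * t) *
        ∫ x : 𝕀, (p * jacobiFlow (A + e) (B + d) q t).eval (x : ℝ) ∂jacobiMeasure A B ≤
      ∫ x : 𝕀, (jacobiFlow (A - e) (B - d) p t * q).eval (x : ℝ) ∂jacobiMeasure A B := by
  have ha' : -1 < A + e := by linarith
  have hb' : -1 < B + d := by linarith
  have := isFiniteMeasure_jacobiMeasure (by linarith : -1 < A) (by linarith : -1 < B)
  have hJ (s : ℝ) := hasDerivAt_integral_exp_mul_jacobiFlow_mul_jacobiFlow (A - e) (B - d) (A + e)
    (B + d) ((e + d) * (A + B + 1)) t s p q (jacobiMeasure A B)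
  have hanti := antitoneOn_of_deriv_nonpos (convex_Icc 0 t)
    (fun s _ => (hJ s).continuousAt.continuousWithinAt)
    (fun s _ => (hJ s).differentiableAt.differentiableWithinAt) fun s hs => by
      rw [interior_Icc] at hs
      rw [(hJ s).deriv, integral_const_mul]
      exact mul_nonpos_of_nonneg_of_nonpos (exp_pos _).le
        (integral_jacobiDiff_comparison_nonpos hA hB he hd
          (fun x hx => eval_jacobiFlow_nonneg ha hb hp (by linarith [hs.2]) hx)
          (fun x hx => eval_jacobiFlow_nonneg ha' hb' hq hs.1.le hx))
  have h := hanti (Set.left_mem_Icc.2 ht) (Set.right_mem_Icc.2 ht) ht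
  simpa only [integral_const_mul, sub_self, sub_zero, mul_zero, exp_zero, one_mul,
    jacobiFlow_zero ha hb, jacobiFlow_zero ha' hb'] using h

end JacobiComparison

section CompactIntegral

variable {X E : Type*} [TopologicalSpace X] [CompactSpace X] [MeasurableSpace X]
  [OpensMeasurableSpace X] [NormedAddCommGroup E] [NormedSpace ℝ E] {μ : Measure X}
  [IsFiniteMeasure μ]

lemma hasSum_integral_of_continuous {ι : Type*} [Countable ι] {f : ι → X → E} {u : ι → ℝ}
    [CompleteSpace E] (hf : ∀ i, Continuous (f i)) (hu : Summable u) (hfu : ∀ i x, ‖f i x‖ ≤ u i) :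
    HasSum (fun i => ∫ x, f i x ∂μ) (∫ x, ∑' i, f i x ∂μ) :=
  hasSum_integral_of_dominated_convergence (fun i _ => u i)
    (fun i => (integrable_of_continuous (hf i)).aestronglyMeasurable)
    (fun i => .of_forall (hfu i)) (.of_forall fun _ => hu) (integrable_const _)
    (.of_forall fun x => (hu.of_norm_bounded fun i => hfu i x).hasSum)

lemma continuous_integral_of_continuous {Y : Type*} [TopologicalSpace Y]
    [FirstCountableTopology Y] [LocallyCompactSpace Y] [SecondCountableTopologyEither X E]
    {f : Y → X → E} (hf : Continuous f.uncurry) : Continuous fun y => ∫ x, f y x ∂μ := by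
  simpa only [setIntegral_univ] using
    continuous_parametric_integral_of_continuous (μ := μ) hf isCompact_univ

end CompactIntegral

section JacobiKernel

open Polynomial

variable {a b t : ℝ}

lemma summable_exp_neg_mul_sq_add (ht : 0 < t) (β : ℝ) :
    Summable fun n : ℕ => exp (-t * n ^ 2 + β * n) := by
  refine Summable.of_nonneg_of_le (fun _ => (exp_pos _).le) (fun n => ?_)
    (Real.summable_exp_neg_nat.mul_left (exp ((β + 1) ^ 2 / (4 * t))))
  rw [← exp_add, exp_le_exp, ← sub_le_iff_le_add, le_div_iff₀ (by positivity)]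
  linarith [sq_nonneg (2 * t * n - (β + 1))]

/-- The `n`-th term of the Jacobi heat kernel. -/
noncomputable def jacobiKernelTerm (a b t : ℝ) (n : ℕ) (x y : ℝ) : ℝ :=
  exp (-jacobiEigenvalue a b n * t) * (jacobiPoly a b n).eval x * (jacobiPoly a b n).eval y /
    jacobiNormSq a b n

/-- The Jacobi heat kernel as the sum of its polynomial expansion; unlike `jacobiHeat` it carries
no junk values at the endpoints of `[-1, 1]`. -/
noncomputable def jacobiKernel (a b t x y : ℝ) : ℝ := ∑' n, jacobiKernelTerm a b t n x y

lemma exists_summable_abs_jacobiKernelTerm_le (ha : -1 < a) (hb : -1 < b) (ht : 0 < t) :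
    ∃ u : ℕ → ℝ, Summable u ∧
      ∀ n, ∀ x ∈ 𝕀, ∀ y ∈ 𝕀, |jacobiKernelTerm a b t n x y| ≤ u n := by
  obtain ⟨c, hc, r, hr, hnorm⟩ := exists_mul_pow_le_jacobiNormSq ha hb
  refine ⟨fun n => exp (2 * (|a| + |b|)) / c *
    exp (-t * n ^ 2 + (4 - t * (a + b + 1) - log r) * n),
    (summable_exp_neg_mul_sq_add ht _).mul_left _, fun n x hx y hy => ?_⟩
  have hx' := abs_eval_jacobiPoly_le a b n (abs_le.2 hx)
  have hy' := abs_eval_jacobiPoly_le a b n (abs_le.2 hy)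
  have hpow : r ^ n = exp (n * log r) := by rw [exp_nat_mul, exp_log hr]
  rw [jacobiKernelTerm, abs_div, abs_mul, abs_mul, abs_exp,
    abs_of_pos (jacobiNormSq_pos ha hb n)]
  calc _ ≤ exp (-jacobiEigenvalue a b n * t) * exp (|a| + |b| + 2 * n) *
        exp (|a| + |b| + 2 * n) / (c * r ^ n) := by
        gcongr
        exact hnorm n
    _ = _ := by
        rw [hpow, ← exp_add, ← exp_add, mul_comm c, ← div_div, ← exp_sub, jacobiEigenvalue]
        simp only [div_mul_eq_mul_div, ← exp_add]
        ring_nf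

lemma jacobiKernelTerm_comm (a b t : ℝ) (n : ℕ) (x y : ℝ) :
    jacobiKernelTerm a b t n x y = jacobiKernelTerm a b t n y x := by
  rw [jacobiKernelTerm, mul_right_comm, jacobiKernelTerm]

lemma jacobiKernel_comm (a b t x y : ℝ) : jacobiKernel a b t x y = jacobiKernel a b t y x :=
  tsum_congr fun n => jacobiKernelTerm_comm a b t n x y

lemma continuous_jacobiKernelTerm (a b t : ℝ) (n : ℕ) :
    Continuous fun z : ℝ × ℝ => jacobiKernelTerm a b t n z.1 z.2 := by
  unfold jacobiKernelTerm
  fun_prop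

lemma continuous_jacobiKernel (ha : -1 < a) (hb : -1 < b) (ht : 0 < t) :
    Continuous fun z : 𝕀 × 𝕀 => jacobiKernel a b t z.1 z.2 := by
  obtain ⟨u, hu, hle⟩ := exists_summable_abs_jacobiKernelTerm_le ha hb ht
  exact continuous_tsum (fun n => (continuous_jacobiKernelTerm a b t n).comp
    (by fun_prop : Continuous fun z : 𝕀 × 𝕀 => ((z.1 : ℝ), (z.2 : ℝ)))) hu
    fun n z => hle n z.1 z.1.2 z.2 z.2.2

lemma integral_mul_jacobiKernel (ha : -1 < a) (hb : -1 < b) (ht : 0 < t) (p : ℝ[X]) {y : ℝ}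
    (hy : y ∈ 𝕀) : ∫ x : 𝕀, p.eval (x : ℝ) * jacobiKernel a b t x y ∂jacobiMeasure a b =
      (jacobiFlow a b p t).eval y := by
  have := isFiniteMeasure_jacobiMeasure ha hb
  obtain ⟨u, hu, hle⟩ := exists_summable_abs_jacobiKernelTerm_le ha hb ht
  have hsum : HasSum
      (fun n => ∫ x : 𝕀, p.eval (x : ℝ) * jacobiKernelTerm a b t n x y ∂jacobiMeasure a b)
      (∫ x : 𝕀, p.eval (x : ℝ) * jacobiKernel a b t x y ∂jacobiMeasure a b) := by
    simp only [jacobiKernel, ← tsum_mul_left]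
    refine hasSum_integral_of_continuous (fun n => ?_) (hu.mul_left (coeffNorm p)) fun n x => ?_
    · exact (by fun_prop : Continuous fun x : 𝕀 => p.eval (x : ℝ)).mul
        ((continuous_jacobiKernelTerm a b t n).comp
          (by fun_prop : Continuous fun x : 𝕀 => ((x : ℝ), y)))
    · rw [norm_mul]
      exact mul_le_mul (norm_eval_le_coeffNorm p (abs_le.2 x.2)) (hle n x x.2 y hy)
        (norm_nonneg _) (coeffNorm_nonneg p)
  have hterm (n : ℕ) : ∫ x : 𝕀, p.eval (x : ℝ) * jacobiKernelTerm a b t n x y ∂jacobiMeasure a b =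
      exp (-jacobiEigenvalue a b n * t) * jacobiCoeff a b p n * (jacobiPoly a b n).eval y := by
    rw [jacobiCoeff, mul_div_assoc', div_mul_eq_mul_div, ← integral_const_mul, ← integral_mul_const,
      ← integral_div]
    congr with x
    rw [jacobiKernelTerm, eval_mul]
    ring
  simp only [hterm] at hsum
  refine hsum.unique ?_
  simp only [jacobiFlow, eval_finsetSum, eval_smul, smul_eq_mul]
  refine hasSum_sum_of_ne_finset_zero fun n hn => ?_
  rw [jacobiCoeff_of_natDegree_lt ha hb (by simpa using hn)]
  simp

end JacobiKernel

section KernelComparison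

open Polynomial

lemma nonneg_of_integral_eval_mul_nonneg {s : Set ℝ} [CompactSpace s] {μ : Measure s}
    [IsFiniteMeasure μ] [μ.IsOpenPosMeasure] {g : s → ℝ} (hg : Continuous g)
    (h : ∀ p : ℝ[X], (∀ x ∈ s, 0 ≤ p.eval x) → 0 ≤ ∫ x : s, p.eval (x : ℝ) * g x ∂μ) (x₀ : s) :
    0 ≤ g x₀ := by
  obtain ⟨M, hM⟩ := isCompact_univ.exists_bound_of_continuousOn
    (by fun_prop : Continuous fun x : s => ((x : ℝ) - x₀) ^ 2).continuousOn
  have hM' (x : s) : ((x : ℝ) - x₀) ^ 2 ≤ M := (le_abs_self _).trans (hM x (Set.mem_univ x))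
  set peak : ℝ[X] := C (M + 1) - (X - C (x₀ : ℝ)) ^ 2 with hpeak
  have hpeak_eval (x : ℝ) : peak.eval x = M + 1 - (x - x₀) ^ 2 := by simp [hpeak]
  have hpeak_nonneg (x : s) : 0 ≤ peak.eval (x : ℝ) := by rw [hpeak_eval]; linarith [hM' x]
  refine ge_of_tendsto'
    (tendsto_setIntegral_pow_smul_of_unique_maximum_of_isCompact_of_measure_nhdsWithin_pos (μ := μ)
      (c := fun x : s => peak.eval (x : ℝ)) isCompact_univ (fun U hU hx => ?_) (by fun_prop)
      (fun x _ hx => ?_) (fun x _ => hpeak_nonneg x) ?_ (Set.mem_univ x₀)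
      (integrable_of_continuous hg).integrableOn hg.continuousWithinAt) fun n => ?_
  · rw [Set.inter_univ]
    exact hU.measure_pos μ ⟨x₀, hx⟩
  · have hne : (x : ℝ) - x₀ ≠ 0 := sub_ne_zero.2 (Subtype.coe_injective.ne hx)
    rw [hpeak_eval, hpeak_eval]
    linarith [sq_pos_of_ne_zero hne, sub_self (x₀ : ℝ)]
  · rw [hpeak_eval]
    linarith [hM' x₀]
  · simp only [setIntegral_univ]
    refine smul_nonneg (inv_nonneg.2 ?_) ?_
    · exact integral_nonneg fun x => pow_nonneg (hpeak_nonneg x) n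
    · simpa only [eval_pow, smul_eq_mul] using h (peak ^ n) fun x hx => by
        rw [eval_pow]; exact pow_nonneg (hpeak_nonneg ⟨x, hx⟩) n

variable {A B e d t : ℝ}

lemma exp_mul_integral_integral_jacobiKernel_le (hA : 0 ≤ A) (hB : 0 ≤ B) (he : 0 ≤ e)
    (hd : 0 ≤ d) (ha : -1 < A - e) (hb : -1 < B - d) (ht : 0 < t) {p q : ℝ[X]}
    (hp : ∀ x ∈ 𝕀, 0 ≤ p.eval x) (hq : ∀ x ∈ 𝕀, 0 ≤ q.eval x) :
    exp (-((e + d) * (A + B + 1)) * t) * ∫ y : 𝕀, q.eval (y : ℝ) * (jacobiWeight e d y *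
        ∫ x : 𝕀, p.eval (x : ℝ) * jacobiKernel (A + e) (B + d) t x y ∂jacobiMeasure A B)
          ∂jacobiMeasure A B ≤
      ∫ y : 𝕀, q.eval (y : ℝ) * (jacobiFlow (A - e) (B - d) p t).eval (y : ℝ)
        ∂jacobiMeasure A B := by
  have ha' : -1 < A + e := by linarith
  have hb' : -1 < B + d := by linarith
  have := isFiniteMeasure_jacobiMeasure (by linarith : -1 < A) (by linarith : -1 < B)
  have hK := continuous_jacobiKernel ha' hb' ht
  have hΦ := continuous_jacobiWeight he hd
  have hint : Integrable (fun z : 𝕀 × 𝕀 => q.eval (z.1 : ℝ) * (jacobiWeight e d z.1 *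
      (p.eval (z.2 : ℝ) * jacobiKernel (A + e) (B + d) t z.2 z.1)))
      ((jacobiMeasure A B).prod (jacobiMeasure A B)) := by
    have hK' : Continuous fun z : 𝕀 × 𝕀 => jacobiKernel (A + e) (B + d) t z.2 z.1 :=
      hK.comp continuous_swap
    exact integrable_of_continuous (by fun_prop)
  have hswap : ∫ y : 𝕀, q.eval (y : ℝ) * (jacobiWeight e d y *
        ∫ x : 𝕀, p.eval (x : ℝ) * jacobiKernel (A + e) (B + d) t x y ∂jacobiMeasure A B)
          ∂jacobiMeasure A B =
      ∫ x : 𝕀, (p * jacobiFlow (A + e) (B + d) q t).eval (x : ℝ) ∂jacobiMeasure A B := by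
    simp only [← integral_const_mul]
    rw [integral_integral_swap hint]
    congr with x
    rw [eval_mul, ← integral_mul_jacobiKernel ha' hb' ht q x.2, integral_jacobiMeasure_add,
      ← integral_const_mul]
    congr with y
    rw [jacobiKernel_comm]
    ring
  rw [hswap]
  refine (exp_mul_integral_mul_jacobiFlow_le hA hB he hd ha hb hp hq ht.le).trans_eq ?_
  simp only [eval_mul, mul_comm]

lemma integral_mul_jacobiKernel_sub (he : 0 ≤ e) (hd : 0 ≤ d) (ha : -1 < A - e)
    (hb : -1 < B - d) (ht : 0 < t) (c : ℝ) (p : ℝ[X]) {y : ℝ} (hy : y ∈ 𝕀) :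
    ∫ x : 𝕀, p.eval (x : ℝ) * (jacobiKernel (A - e) (B - d) t x y -
        c * (jacobiWeight e d x * jacobiWeight e d y * jacobiKernel (A + e) (B + d) t x y))
          ∂jacobiMeasure (A - e) (B - d) =
      (jacobiFlow (A - e) (B - d) p t).eval y - c * (jacobiWeight e d y *
        ∫ x : 𝕀, p.eval (x : ℝ) * jacobiKernel (A + e) (B + d) t x y ∂jacobiMeasure A B) := by
  have := isFiniteMeasure_jacobiMeasure ha hb
  have hshift := integral_jacobiMeasure_add (A - e) (B - d) e d
    fun x : 𝕀 => p.eval (x : ℝ) * jacobiKernel (A + e) (B + d) t x y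
  rw [sub_add_cancel, sub_add_cancel] at hshift
  have hpair : Continuous fun x : 𝕀 => (x, (⟨y, hy⟩ : 𝕀)) := by fun_prop
  have hΦ := continuous_jacobiWeight he hd
  have hKsub := (continuous_jacobiKernel ha hb ht).comp hpair
  have hKadd := (continuous_jacobiKernel (by linarith : -1 < A + e) (by linarith : -1 < B + d)
    ht).comp hpair
  simp only [Function.comp_def] at hKsub hKadd
  rw [hshift, ← integral_mul_jacobiKernel ha hb ht p hy, ← integral_const_mul,
    ← integral_const_mul, ← integral_sub (integrable_of_continuous (by fun_prop))
      (integrable_of_continuous (by fun_prop))]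
  congr with x
  ring

lemma integral_integral_mul_jacobiKernel_sub_nonneg (hA : 0 ≤ A) (hB : 0 ≤ B) (he : 0 ≤ e)
    (hd : 0 ≤ d) (ha : -1 < A - e) (hb : -1 < B - d) (ht : 0 < t) {p q : ℝ[X]}
    (hp : ∀ x ∈ 𝕀, 0 ≤ p.eval x) (hq : ∀ x ∈ 𝕀, 0 ≤ q.eval x) :
    0 ≤ ∫ y : 𝕀, q.eval (y : ℝ) * ∫ x : 𝕀, p.eval (x : ℝ) *
      (jacobiKernel (A - e) (B - d) t x y - exp (-((e + d) * (A + B + 1)) * t) *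
        (jacobiWeight e d x * jacobiWeight e d y * jacobiKernel (A + e) (B + d) t x y))
          ∂jacobiMeasure (A - e) (B - d) ∂jacobiMeasure A B := by
  have := isFiniteMeasure_jacobiMeasure (by linarith : -1 < A) (by linarith : -1 < B)
  have hΦ := continuous_jacobiWeight he hd
  have hK : Continuous fun z : 𝕀 × 𝕀 => jacobiKernel (A + e) (B + d) t z.2 z.1 :=
    (continuous_jacobiKernel (by linarith) (by linarith) ht).comp continuous_swap
  have hKp : Continuous fun y : 𝕀 => ∫ x : 𝕀, p.eval (x : ℝ) *
      jacobiKernel (A + e) (B + d) t x y ∂jacobiMeasure A B :=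
    continuous_integral_of_continuous (by fun_prop)
  simp only [integral_mul_jacobiKernel_sub he hd ha hb ht _ p (Subtype.coe_prop _)]
  simp only [mul_sub, mul_left_comm _ (exp _)]
  rw [integral_sub (integrable_of_continuous (by fun_prop))
    (integrable_of_continuous (by fun_prop)), integral_const_mul, sub_nonneg]
  exact exp_mul_integral_integral_jacobiKernel_le hA hB he hd ha hb ht hp hq

theorem exp_mul_jacobiWeight_mul_jacobiKernel_le (hA : 0 ≤ A) (hB : 0 ≤ B) (he : 0 ≤ e)
    (hd : 0 ≤ d) (ha : -1 < A - e) (hb : -1 < B - d) (ht : 0 < t) {x y : ℝ} (hx : x ∈ 𝕀)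
    (hy : y ∈ 𝕀) :
    exp (-((e + d) * (A + B + 1)) * t) *
        (jacobiWeight e d x * jacobiWeight e d y * jacobiKernel (A + e) (B + d) t x y) ≤
      jacobiKernel (A - e) (B - d) t x y := by
  have := isFiniteMeasure_jacobiMeasure (by linarith : -1 < A) (by linarith : -1 < B)
  have := isFiniteMeasure_jacobiMeasure ha hb
  have hΦ := continuous_jacobiWeight he hd
  have hKsub := continuous_jacobiKernel ha hb ht
  have hKadd := continuous_jacobiKernel (by linarith : -1 < A + e) (by linarith : -1 < B + d) ht
  set g : 𝕀 × 𝕀 → ℝ := fun z => jacobiKernel (A - e) (B - d) t z.1 z.2 -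
    exp (-((e + d) * (A + B + 1)) * t) * (jacobiWeight e d z.1 * jacobiWeight e d z.2 *
      jacobiKernel (A + e) (B + d) t z.1 z.2)
  have hgcont : Continuous g := by fun_prop
  suffices h : 0 ≤ g (⟨x, hx⟩, ⟨y, hy⟩) from sub_nonneg.1 h
  refine nonneg_of_integral_eval_mul_nonneg (μ := jacobiMeasure (A - e) (B - d))
    (g := fun x => g (x, ⟨y, hy⟩)) (by fun_prop) (fun p hp => ?_) ⟨x, hx⟩
  exact nonneg_of_integral_eval_mul_nonneg (μ := jacobiMeasure A B)
    (g := fun y => ∫ x : 𝕀, p.eval (x : ℝ) * g (x, y) ∂jacobiMeasure (A - e) (B - d))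
    (continuous_integral_of_continuous (by fun_prop)) (fun q hq =>
      integral_integral_mul_jacobiKernel_sub_nonneg hA hB he hd ha hb ht hp hq) ⟨y, hy⟩

end KernelComparison

section RodriguesFormula

open Polynomial

lemma iteratedDeriv_jacobiWeight_add (n : ℕ) : ∀ {a b x : ℝ}, (x ≠ 1 ∨ 0 ≤ a) →
    (x ≠ -1 ∨ 0 ≤ b) → iteratedDeriv n (jacobiWeight (a + n) (b + n)) x =
      (-2) ^ n * n.factorial * (jacobiWeight a b x * (jacobiPoly a b n).eval x) := by
  induction n with
  | zero => simp [jacobiPoly_zero]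
  | succ n ih =>
    intro a b x hx₁ hx₂
    have h₁ : ∀ᶠ y in nhds x, y ≠ 1 ∨ 0 ≤ a + 1 := hx₁.elim
      (fun h => (isOpen_ne.eventually_mem h).mono fun _ => Or.inl)
      fun h => .of_forall fun _ => .inr (by linarith)
    have h₂ : ∀ᶠ y in nhds x, y ≠ -1 ∨ 0 ≤ b + 1 := hx₂.elim
      (fun h => (isOpen_ne.eventually_mem h).mono fun _ => Or.inl)
      fun h => .of_forall fun _ => .inr (by linarith)
    have hder := hasDerivAt_jacobiWeight_mul (A := a + 1) (B := b + 1)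
      (hx₁.imp_right le_add_of_nonneg_left) (hx₂.imp_right le_add_of_nonneg_left)
      (jacobiPoly (a + 1) (b + 1) n)
    have hiter : iteratedDeriv n (jacobiWeight (a + (n + 1 : ℕ)) (b + (n + 1 : ℕ))) =ᶠ[nhds x]
        fun y => (-2) ^ n * n.factorial *
          (jacobiWeight (a + 1) (b + 1) y * (jacobiPoly (a + 1) (b + 1) n).eval y) := by
      filter_upwards [h₁, h₂] with y hy₁ hy₂
      rw [← ih hy₁ hy₂, Nat.cast_succ, add_right_comm a, add_right_comm b, add_assoc a, add_assoc b]
    rw [iteratedDeriv_succ, hiter.deriv_eq, (hder.const_mul _).deriv, add_sub_cancel_right,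
      add_sub_cancel_right, jacobiPoly_succ, eval_smul, smul_eq_mul, Nat.factorial_succ]
    push_cast
    field_simp
    ring

/-- The value of `(1 - x) ^ (-a) * (1 - x) ^ a * (1 + x) ^ (-b) * (1 + x) ^ b` on `[-1, 1]`. It is
`1` except at an endpoint whose exponent is nonzero, where it is `0` because `0 ^ a = 0`; there the
Rodrigues formula `jacobiP` returns `0` instead of the value of the Jacobi polynomial. -/
noncomputable def jacobiEndpointFactor (a b x : ℝ) : ℝ :=
  jacobiWeight (-a) (-b) x * jacobiWeight a b x

lemma jacobiEndpointFactor_of_mem_Ioo (a b : ℝ) {x : ℝ} (hx : x ∈ Set.Ioo (-1 : ℝ) 1) :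
    jacobiEndpointFactor a b x = 1 := by
  rw [jacobiEndpointFactor, ← jacobiWeight_add _ _ _ _ hx]
  simp [jacobiWeight]

lemma jacobiEndpointFactor_nonneg (a b : ℝ) {x : ℝ} (hx : x ∈ 𝕀) :
    0 ≤ jacobiEndpointFactor a b x :=
  mul_nonneg (jacobiWeight_nonneg _ _ hx) (jacobiWeight_nonneg _ _ hx)

lemma rpow_mul_rpow_neg_mul_rpow_congr {u a a' c : ℝ} (hu : 0 ≤ u) (h : c = 0 → a = a') :
    u ^ c * (u ^ (-a) * u ^ a) = u ^ c * (u ^ (-a') * u ^ a') := by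
  rcases hu.eq_or_lt with rfl | hu
  · by_cases hc : c = 0
    · rw [h hc]
    · simp [zero_rpow hc]
  · simp [← rpow_add hu]

lemma jacobiWeight_mul_jacobiEndpointFactor_congr {a a' b b' c d x : ℝ} (ha : c = 0 → a = a')
    (hb : d = 0 → b = b') (hx : x ∈ 𝕀) :
    jacobiWeight c d x * jacobiEndpointFactor a b x =
      jacobiWeight c d x * jacobiEndpointFactor a' b' x := by
  have h₁ := rpow_mul_rpow_neg_mul_rpow_congr (sub_nonneg.2 hx.2) ha
  have h₂ := rpow_mul_rpow_neg_mul_rpow_congr (neg_le_iff_add_nonneg'.1 hx.1) hb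
  unfold jacobiEndpointFactor jacobiWeight
  linear_combination (1 + x) ^ d * ((1 + x) ^ (-b) * (1 + x) ^ b) * h₁ +
    (1 - x) ^ c * ((1 - x) ^ (-a') * (1 - x) ^ a') * h₂

lemma jacobiP_eq (a b : ℝ) (n : ℕ) (x : ℝ) :
    jacobiP a b n x = jacobiEndpointFactor a b x * (jacobiPoly a b n).eval x := by
  by_cases h : (x ≠ 1 ∨ 0 ≤ a) ∧ (x ≠ -1 ∨ 0 ≤ b)
  · have hw : (fun y : ℝ => (1 - y) ^ (a + (n : ℝ)) * (1 + y) ^ (b + (n : ℝ))) =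
        jacobiWeight (a + n) (b + n) := rfl
    have hc : (-1 : ℝ) ^ n / (2 ^ n * n.factorial) * ((-2) ^ n * n.factorial) = 1 := by
      rw [neg_pow 2 n]
      field_simp
      rw [← pow_mul, mul_comm, pow_mul, neg_one_sq, one_pow]
    rw [jacobiP, hw, iteratedDeriv_jacobiWeight_add n h.1 h.2, jacobiEndpointFactor]
    unfold jacobiWeight
    linear_combination (1 - x) ^ (-a) * (1 + x) ^ (-b) * ((1 - x) ^ a * (1 + x) ^ b) *
      (jacobiPoly a b n).eval x * hc
  · have hzero : (1 - x) ^ (-a) * (1 + x) ^ (-b) = 0 := by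
      rw [not_and_or, not_or, not_or, not_not, not_not, not_le, not_le] at h
      rcases h with ⟨rfl, ha⟩ | ⟨rfl, hb⟩
      · rw [sub_self, zero_rpow (neg_ne_zero.2 ha.ne), zero_mul]
      · rw [add_neg_cancel, zero_rpow (neg_ne_zero.2 hb.ne), mul_zero]
    rw [jacobiP, mul_assoc _ ((1 - x) ^ (-a)), jacobiEndpointFactor, jacobiWeight, hzero]
    simp

lemma hJacobi_eq_jacobiNormSq (a b : ℝ) (n : ℕ) : hJacobi a b n = jacobiNormSq a b n := by
  rw [hJacobi, jacobiNormSq, integral_jacobiMeasure a b (jacobiPoly a b n * jacobiPoly a b n).eval,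
    integral_Icc_eq_integral_Ioo, intervalIntegral.integral_of_le (by norm_num),
    integral_Ioc_eq_integral_Ioo]
  refine setIntegral_congr_fun measurableSet_Ioo fun x hx => ?_
  simp only [jacobiP_eq, jacobiEndpointFactor_of_mem_Ioo a b hx, jacobiWeight, eval_mul]
  ring

lemma jacobiHeat_eq (a b t x y : ℝ) :
    jacobiHeat a b t x y =
      jacobiEndpointFactor a b x * jacobiEndpointFactor a b y * jacobiKernel a b t x y := by
  rw [jacobiHeat, jacobiKernel, ← tsum_mul_left]
  refine tsum_congr fun n => ?_
  rw [jacobiP_eq, jacobiP_eq, hJacobi_eq_jacobiNormSq, jacobiKernelTerm, jacobiEigenvalue]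
  ring_nf

end RodriguesFormula

/-- Theorem 3.5 (comparison principle): for α, β > -1, ε, δ ≥ 0 with α ≥ -ε/2, β ≥ -δ/2,
and Φ_{ε,δ}(x) = (1-x)^{ε/2}(1+x)^{δ/2},
Φ_{ε,δ}(x)Φ_{ε,δ}(y) G_t^{(α+ε,β+δ)}(x,y) ≤ exp(((ε+δ)/2)(α+β+1+(ε+δ)/2)t) G_t^{(α,β)}(x,y). -/
theorem stmt13 (a b ε δ : ℝ) (ha : -1 < a) (hb : -1 < b) (hε : 0 ≤ ε) (hδ : 0 ≤ δ)
    (haε : -ε/2 ≤ a) (hbδ : -δ/2 ≤ b) :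
    ∀ x ∈ Set.Icc (-1 : ℝ) 1, ∀ y ∈ Set.Icc (-1 : ℝ) 1, ∀ t : ℝ, 0 < t →
      ((1 - x) ^ (ε/2) * (1 + x) ^ (δ/2)) * ((1 - y) ^ (ε/2) * (1 + y) ^ (δ/2)) *
          jacobiHeat (a + ε) (b + δ) t x y ≤
        Real.exp ((ε + δ)/2 * (a + b + 1 + (ε + δ)/2) * t) * jacobiHeat a b t x y := by
  intro x hx y hy t ht
  have hχ := mul_nonneg (jacobiEndpointFactor_nonneg a b hx) (jacobiEndpointFactor_nonneg a b hy)
  have hΦχ {z : ℝ} (hz : z ∈ 𝕀) := jacobiWeight_mul_jacobiEndpointFactor_congr (a := a + ε)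
    (a' := a) (b := b + δ) (b' := b) (c := ε / 2) (d := δ / 2) (by grind) (by grind) hz
  have hK := exp_mul_jacobiWeight_mul_jacobiKernel_le (A := a + ε / 2) (B := b + δ / 2)
    (e := ε / 2) (d := δ / 2) (by linarith) (by linarith) (by linarith) (by linarith)
    (by linarith) (by linarith) ht hx hy
  rw [neg_mul, exp_neg, inv_mul_le_iff₀ (exp_pos _), add_sub_cancel_right, add_sub_cancel_right,
    add_assoc a, add_halves, add_assoc b, add_halves] at hK
  rw [jacobiHeat_eq, jacobiHeat_eq]
  calc _ = jacobiWeight (ε / 2) (δ / 2) x * jacobiEndpointFactor (a + ε) (b + δ) x *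
          (jacobiWeight (ε / 2) (δ / 2) y * jacobiEndpointFactor (a + ε) (b + δ) y) *
            jacobiKernel (a + ε) (b + δ) t x y := by unfold jacobiWeight; ring
    _ = jacobiEndpointFactor a b x * jacobiEndpointFactor a b y * (jacobiWeight (ε / 2) (δ / 2) x *
          jacobiWeight (ε / 2) (δ / 2) y * jacobiKernel (a + ε) (b + δ) t x y) := by
      rw [hΦχ hx, hΦχ hy]; ring
    _ ≤ _ := mul_le_mul_of_nonneg_left hK hχ
    _ = _ := by ring_nf
end

section
/- Let α, β > -1 and ε, δ ≥ 0 with α ≥ -ε/2, β ≥ -δ/2. Then for all θ, φ ∈ [0,π] and t > 0 the Jacobi heat kernels in the trigonometric 'function' setting satisfy 𝔾_t^{(α+ε,β+δ)}(θ,φ) ≤ 𝔾_t^{(α,β)}(θ,φ). In particular, for α, β ≥ 0 the kernel 𝔾_t^{(α,β)}(θ,φ) is nonincreasing in each of the parameters α and β. -/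
open Real MeasureTheory

/-- Normalized Jacobi trigonometric polynomial 𝒫_n^{(a,b)}. -/
noncomputable def trigP (a b : ℝ) (n : ℕ) (θ : ℝ) : ℝ :=
  (2 : ℝ) ^ ((a + b + 1)/2) * (hJacobi a b n) ^ (-(1/2 : ℝ)) * jacobiP a b n (Real.cos θ)

/-- Jacobi trigonometric function φ_n^{(a,b)}. -/
noncomputable def phiFn (a b : ℝ) (n : ℕ) (θ : ℝ) : ℝ :=
  (Real.sin (θ/2)) ^ (a + 1/2) * (Real.cos (θ/2)) ^ (b + 1/2) * trigP a b n θ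

/-- Heat kernel 𝔾_t^{(a,b)} in the Jacobi trigonometric 'function' setting. -/
noncomputable def funHeat (a b : ℝ) (t θ φ : ℝ) : ℝ :=
  ∑' n : ℕ, Real.exp (-t * ((n : ℝ) + (a + b + 1)/2) ^ 2) * phiFn a b n θ * phiFn a b n φ

/-!
The polynomial heat semigroup of type `(a, b)` is generated by the Jacobi operator `J`, and on
polynomials it is the limit of `(1 + t J / k)⁻ᵏ`. At `±1` the leading coefficient of `J` vanishes
and its drift points inwards, so `1 + s J` satisfies a minimum principle without any boundary
condition and its inverse preserves positivity on `[-1, 1]`. Multiplication by `(1 - x)ᵉ`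
intertwines the operators of type `(a + 2e, b)` and `(a, b)` up to the potential
`-2e(a + e) / (1 - x)`, which has the favourable sign when `a + e ≥ 0`. The minimum principle
therefore compares the two resolvents, hence their powers and the two semigroups. Testing against
polynomials, which are dense, turns this into the pointwise bound
`(1 - x)ᵉ (1 - y)ᵉ G^(a + 2e, b) ≤ G^(a, b)` between heat kernels, and in the trigonometric function
setting the powers `(1 - x)ᵉ (1 - y)ᵉ` are absorbed by the prefactors of the kernels. The reflection
`θ ↦ π - θ` exchanges `a` and `b`, so the second parameter needs no separate argument.
-/

namespace JacobiHeat

open Polynomial Set Filter Topology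

/-! ### The minimum principle -/

section MinimumPrinciple

lemma second_deriv_nonneg_of_isLocalMin {f f' : ℝ → ℝ} {f'' x : ℝ} (hmin : IsLocalMin f x)
    (hf : ∀ᶠ y in 𝓝 x, HasDerivAt f (f' y) y) (hf' : HasDerivAt f' f'' x) : 0 ≤ f'' := by
  by_contra! hneg
  have hderiv : deriv f =ᶠ[𝓝 x] f' := hf.mono fun y hy => hy.deriv
  have hderiv₂ : deriv (deriv f) x = f'' := by rw [hderiv.deriv_eq, hf'.deriv]
  have hmax : IsLocalMax f x := isLocalMax_of_deriv_deriv_neg (hderiv₂ ▸ hneg)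
    hmin.deriv_eq_zero hf.self_of_nhds.continuousAt
  have hconst : f =ᶠ[𝓝 x] fun _ => f x := by
    filter_upwards [hmin, hmax] with y h₁ h₂ using le_antisymm h₂ h₁
  have hzero : deriv (deriv f) x = 0 := by rw [hconst.deriv.deriv_eq]; simp
  exact hneg.ne (hderiv₂.symm.trans hzero)

variable {l u : ℝ} {σ τ w w' w'' : ℝ → ℝ}

/- At an endpoint `σ` vanishes and the drift `τ` points into the interval, so the first-order
term alone has the right sign. -/
lemma nonneg_of_isMinOn_Icc (hlu : l < u) (hσ : ∀ x ∈ Icc l u, 0 ≤ σ x)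
    (hσl : σ l = 0) (hσu : σ u = 0) (hτl : 0 ≤ τ l) (hτu : τ u ≤ 0) {z : ℝ} (hz : z ∈ Icc l u)
    (hmin : IsMinOn w (Icc l u) z) (hw : ∀ᶠ y in 𝓝 z, HasDerivAt w (w' y) y)
    (hw' : HasDerivAt w' (w'' z) z) : 0 ≤ σ z * w'' z + τ z * w' z := by
  have hdir : ∀ y ∈ Icc l u, 0 ≤ (y - z) * w' z := fun y hy => by
    simpa using (IsMinOn.localize hmin).hasFDerivWithinAt_nonneg
      hw.self_of_nhds.hasFDerivAt.hasFDerivWithinAt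
      (sub_mem_posTangentConeAt_of_segment_subset ((convex_Icc l u).segment_subset hz hy))
  rcases hz.1.eq_or_lt with rfl | hlz
  · have : 0 ≤ w' l := nonneg_of_mul_nonneg_right (hdir u ⟨hlu.le, le_rfl⟩) (sub_pos.mpr hlu)
    simpa [hσl] using mul_nonneg hτl this
  rcases hz.2.eq_or_lt with rfl | hzu
  · have : w' z ≤ 0 := by nlinarith [hdir l ⟨le_rfl, hlu.le⟩]
    simpa [hσu] using mul_nonneg_of_nonpos_of_nonpos hτu this
  have hloc : IsLocalMin w z := hmin.isLocalMin (Icc_mem_nhds hlz hzu)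
  rw [hloc.hasDerivAt_eq_zero hw.self_of_nhds, mul_zero, add_zero]
  exact mul_nonneg (hσ z hz) (second_deriv_nonneg_of_isLocalMin hloc hw hw')

lemma nonneg_on_Icc_of_neg_imp (hlu : l < u) (hσ : ∀ x ∈ Icc l u, 0 ≤ σ x)
    (hσl : σ l = 0) (hσu : σ u = 0) (hτl : 0 ≤ τ l) (hτu : τ u ≤ 0)
    (hw : ContinuousOn w (Icc l u))
    (hneg : ∀ x ∈ Icc l u, w x < 0 → (∀ᶠ y in 𝓝 x, HasDerivAt w (w' y) y) ∧
      HasDerivAt w' (w'' x) x ∧ σ x * w'' x + τ x * w' x < 0) :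
    ∀ x ∈ Icc l u, 0 ≤ w x := by
  obtain ⟨z, hz, hmin⟩ := isCompact_Icc.exists_isMinOn (nonempty_Icc.mpr hlu.le) hw
  suffices hwz : 0 ≤ w z from fun x hx => hwz.trans (hmin hx)
  by_contra! hwz
  obtain ⟨hd, hd', hlt⟩ := hneg z hz hwz
  exact hlt.not_ge (nonneg_of_isMinOn_Icc hlu hσ hσl hσu hτl hτu hz hmin hd hd')

end MinimumPrinciple

/-! ### Integration and test functions -/

section TestFunctions

lemma integrable_tsum_of_summable_integral_norm {X E ι : Type*} [MeasurableSpace X]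
    {μ : Measure X} [NormedAddCommGroup E] [Countable ι] {F : ι → X → E}
    (hmeas : AEStronglyMeasurable (fun x => ∑' i, F i x) μ) (hF : ∀ i, Integrable (F i) μ)
    (hsum : Summable fun i => ∫ x, ‖F i x‖ ∂μ) : Integrable (fun x => ∑' i, F i x) μ := by
  refine ⟨hmeas, (lintegral_mono fun x => enorm_tsum_le_tsum_enorm).trans_lt ?_⟩
  rw [lintegral_tsum fun i => (hF i).1.enorm]
  simp only [← ofReal_integral_norm_eq_lintegral_enorm (hF _)]
  exact hsum.tsum_ofReal_ne_top.lt_top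

lemma tendsto_setIntegral_mul_of_tendstoUniformlyOn {X : Type*} [TopologicalSpace X] [T2Space X]
    [MeasurableSpace X] [OpensMeasurableSpace X] {μ : Measure X} {s : Set X} (hs : IsCompact s)
    {F : ℕ → X → ℝ} {f g : X → ℝ} (hF : ∀ k, ContinuousOn (F k) s) (hg : IntegrableOn g s μ)
    (hlim : TendstoUniformlyOn F f atTop s) :
    Tendsto (fun k => ∫ x in s, g x * F k x ∂μ) atTop (𝓝 (∫ x in s, g x * f x ∂μ)) := by
  have hf : ContinuousOn f s := hlim.continuousOn (.of_forall hF)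
  obtain ⟨C, hC⟩ := hs.exists_bound_of_continuousOn hf
  have hbound : ∀ᶠ k in atTop, ∀ x ∈ s, ‖F k x‖ ≤ C + 1 := by
    filter_upwards [Metric.tendstoUniformlyOn_iff.mp hlim 1 one_pos] with k hk x hx
    have hdist := (dist_eq_norm (f x) (F k x)).symm.trans_lt (hk x hx)
    linarith [norm_le_norm_add_norm_sub (f x) (F k x), hC x hx]
  refine tendsto_integral_filter_of_dominated_convergence (fun x => ‖g x‖ * (C + 1))
    (.of_forall fun k => hg.1.mul ((hF k).aestronglyMeasurable hs.measurableSet)) ?_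
    (hg.norm.mul_const _) ?_
  · filter_upwards [hbound] with k hk
    filter_upwards [ae_restrict_mem hs.measurableSet] with x hx
    rw [norm_mul]
    exact mul_le_mul_of_nonneg_left (hk x hx) (norm_nonneg _)
  · filter_upwards [ae_restrict_mem hs.measurableSet] with x hx
    exact (hlim.tendsto_at hx).const_mul _

lemma exists_polynomial_ge_tendstoUniformlyOn {l u : ℝ} {f : ℝ → ℝ}
    (hf : ContinuousOn f (Icc l u)) :
    ∃ p : ℕ → ℝ[X], (∀ k, ∀ x ∈ Icc l u, f x ≤ (p k).eval x) ∧
      TendstoUniformlyOn (fun k x => (p k).eval x) f atTop (Icc l u) := by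
  have hex : ∀ k : ℕ, ∃ p : ℝ[X], ∀ x ∈ Icc l u,
      |p.eval x - (f x + 1 / ((k : ℝ) + 1))| < 1 / ((k : ℝ) + 1) := fun k =>
    exists_polynomial_near_of_continuousOn l u _ (hf.add continuousOn_const) _
      Nat.one_div_pos_of_nat
  choose p hp using hex
  refine ⟨p, fun k x hx => by linarith [(abs_lt.mp (hp k x hx)).1],
    Metric.tendstoUniformlyOn_iff.mpr fun ε hε => ?_⟩
  filter_upwards [tendsto_one_div_add_atTop_nhds_zero_nat.eventually_lt_const (half_pos hε)]
    with k hk x hx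
  rw [dist_comm, Real.dist_eq, abs_lt]
  constructor <;> linarith [abs_lt.mp (hp k x hx)]

lemma setIntegral_mul_le_of_forall_polynomial {l u : ℝ} {Φ g₁ g₂ ψ : ℝ → ℝ}
    (hΦ : ContinuousOn Φ (Icc l u))
    (hg₁ : IntegrableOn g₁ (Icc l u)) (hg₂ : IntegrableOn g₂ (Icc l u))
    (hpoly : ∀ p q : ℝ[X], (∀ x ∈ Icc l u, 0 ≤ p.eval x) →
      (∀ x ∈ Icc l u, Φ x * p.eval x ≤ q.eval x) →
      ∫ x in Icc l u, g₁ x * p.eval x ≤ ∫ x in Icc l u, g₂ x * q.eval x)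
    (hψ : ContinuousOn ψ (Icc l u)) (hψ₀ : ∀ x ∈ Icc l u, 0 ≤ ψ x) :
    ∫ x in Icc l u, g₁ x * ψ x ≤ ∫ x in Icc l u, g₂ x * Φ x * ψ x := by
  obtain ⟨p, hp, hplim⟩ := exists_polynomial_ge_tendstoUniformlyOn hψ
  refine le_of_tendsto_of_tendsto'
    (tendsto_setIntegral_mul_of_tendstoUniformlyOn isCompact_Icc
      (fun k => (p k).continuousOn) hg₁ hplim)
    (tendsto_setIntegral_mul_of_tendstoUniformlyOn isCompact_Icc
      (fun k => (p k).continuousOn) (hg₂.mul_continuousOn hΦ isCompact_Icc) hplim) fun k => ?_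
  obtain ⟨q, hq, hqlim⟩ :=
    exists_polynomial_ge_tendstoUniformlyOn (hΦ.mul (p k).continuousOn)
  simp only [mul_assoc]
  exact ge_of_tendsto' (tendsto_setIntegral_mul_of_tendstoUniformlyOn isCompact_Icc
      (fun j => (q j).continuousOn) hg₂ hqlim)
    fun j => hpoly (p k) (q j) (fun x hx => (hψ₀ x hx).trans (hp k x hx)) (hq j)

lemma nonneg_of_forall_integral_mul_nonneg {X : Type*} [TopologicalSpace X] [T2Space X]
    [LocallyCompactSpace X] [MeasurableSpace X] [OpensMeasurableSpace X] {μ : Measure X}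
    [IsFiniteMeasureOnCompacts μ] [μ.IsOpenPosMeasure] {U : Set X} (hU : IsOpen U) {g : X → ℝ}
    (hg : ContinuousOn g U)
    (hint : ∀ ψ : X → ℝ, Continuous ψ → 0 ≤ ψ → HasCompactSupport ψ → tsupport ψ ⊆ U →
      0 ≤ ∫ x, g x * ψ x ∂μ) : ∀ x ∈ U, 0 ≤ g x := by
  by_contra! ⟨x, hx, hneg⟩
  obtain ⟨K, hK, hxK, hKU⟩ := exists_compact_subset (hg.isOpen_inter_preimage hU isOpen_Iio)
    (show x ∈ U ∩ g ⁻¹' Iio 0 from ⟨hx, hneg⟩)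
  obtain ⟨ψ, hψx, hψK, hψc, hψ⟩ := exists_continuous_one_zero_of_isCompact isCompact_singleton
    isOpen_interior.isClosed_compl
    (disjoint_compl_right_iff_subset.mpr (singleton_subset_iff.mpr hxK))
  have hsupp : tsupport ψ ⊆ K := closure_minimal
    ((Function.support_subset_iff'.mpr fun y hy => hψK hy).trans interior_subset) hK.isClosed
  have hcont : Continuous fun y => g y * ψ y :=
    (hg.mul ψ.continuous.continuousOn).continuous_of_tsupport_subset hU
      ((tsupport_mul_subset_right).trans (hsupp.trans (hKU.trans inter_subset_left)))
  have hle : ∀ y, g y * ψ y ≤ 0 := fun y => by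
    by_cases hy : y ∈ K
    · exact mul_nonpos_of_nonpos_of_nonneg (hKU hy).2.le (hψ y).1
    · rw [hψK fun h => hy (interior_subset h), Pi.zero_apply, mul_zero]
  have hpos : 0 < ∫ y, -(g y * ψ y) ∂μ :=
    hcont.neg.integral_pos_of_hasCompactSupport_nonneg_nonzero hψc.mul_left.neg
      (fun y => neg_nonneg.mpr (hle y)) (x := x)
      (by simpa [hψx (mem_singleton x)] using hneg.ne)
  rw [integral_neg] at hpos
  linarith [hint ψ ψ.continuous (fun y => (hψ y).1) hψc
    (hsupp.trans (hKU.trans inter_subset_left))]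

end TestFunctions

section Sobolev

variable {l u : ℝ} {f f' : ℝ → ℝ}

lemma sq_sub_sq_le_setIntegral (hf : ∀ x ∈ Icc l u, HasDerivAt f (f' x) x)
    (hf' : ContinuousOn f' (Icc l u)) {x y : ℝ} (hx : x ∈ Icc l u) (hy : y ∈ Icc l u) :
    f x ^ 2 - f y ^ 2 ≤ ∫ z in Icc l u, (f z ^ 2 + f' z ^ 2) := by
  have hfc : ContinuousOn f (Icc l u) := fun z hz => (hf z hz).continuousAt.continuousWithinAt
  have hprod : ContinuousOn (fun z => 2 * f z * f' z) (Icc l u) := (hfc.const_mul 2).mul hf'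
  have hsub : uIcc y x ⊆ Icc l u := uIcc_subset_Icc hy hx
  calc f x ^ 2 - f y ^ 2
      = ∫ z in y..x, 2 * f z * f' z := by
        refine (intervalIntegral.integral_eq_sub_of_hasDerivAt (f := fun z => f z ^ 2)
          (fun z hz => ?_) (hprod.mono hsub).intervalIntegrable).symm
        simpa using (hf z (hsub hz)).fun_pow 2
    _ ≤ ∫ z in uIoc y x, ‖2 * f z * f' z‖ :=
        (Real.le_norm_self _).trans intervalIntegral.norm_integral_le_integral_norm_uIoc
    _ ≤ ∫ z in Icc l u, ‖2 * f z * f' z‖ :=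
        setIntegral_mono_set hprod.norm.integrableOn_Icc (.of_forall fun z => norm_nonneg _)
          (uIoc_subset_uIcc.trans hsub).eventuallyLE
    _ ≤ ∫ z in Icc l u, (f z ^ 2 + f' z ^ 2) := by
        refine setIntegral_mono_on hprod.norm.integrableOn_Icc
          ((hfc.pow 2).add (hf'.pow 2)).integrableOn_Icc measurableSet_Icc fun z _ => ?_
        rw [Real.norm_eq_abs, abs_le]
        constructor <;> nlinarith [sq_nonneg (f z + f' z), sq_nonneg (f z - f' z)]

lemma length_mul_sq_le_setIntegral (hlu : l ≤ u) (hf : ∀ x ∈ Icc l u, HasDerivAt f (f' x) x)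
    (hf' : ContinuousOn f' (Icc l u)) {x : ℝ} (hx : x ∈ Icc l u) :
    (u - l) * f x ^ 2 ≤ (1 + (u - l)) * ∫ z in Icc l u, (f z ^ 2 + f' z ^ 2) := by
  have hfc : ContinuousOn f (Icc l u) := fun z hz => (hf z hz).continuousAt.continuousWithinAt
  have hf₂ : IntegrableOn (fun z => f z ^ 2) (Icc l u) := (hfc.pow 2).integrableOn_Icc
  have hsum : IntegrableOn (fun z => f z ^ 2 + f' z ^ 2) (Icc l u) :=
    ((hfc.pow 2).add (hf'.pow 2)).integrableOn_Icc
  have hint (c : ℝ) : IntegrableOn (fun _ => c) (Icc l u) := continuousOn_const.integrableOn_Icc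
  have hconst (c : ℝ) : ∫ _ in Icc l u, c = (u - l) * c := by
    rw [setIntegral_const, Real.volume_real_Icc_of_le hlu, smul_eq_mul]
  have hle := setIntegral_mono_on (hint _) (hf₂.add (hint _)) measurableSet_Icc
    fun y hy => sub_le_iff_le_add'.mp (sq_sub_sq_le_setIntegral hf hf' hx hy)
  have hle' : ∫ z in Icc l u, f z ^ 2 ≤ ∫ z in Icc l u, (f z ^ 2 + f' z ^ 2) :=
    setIntegral_mono_on hf₂ hsum measurableSet_Icc fun z _ =>
      le_add_of_nonneg_right (sq_nonneg _)
  rw [hconst, integral_add' hf₂ (hint _), hconst] at hle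
  linarith

end Sobolev

/-! ### Jacobi weights and the Rodrigues formula -/

section Rodrigues

/-- The Jacobi weight `(1 - x)ᵃ (1 + x)ᵇ`. -/
noncomputable def jacobiWeight (a b x : ℝ) : ℝ := (1 - x) ^ a * (1 + x) ^ b

/-- The raising operator `R_{a,b} p = (1 - x²) p' + (b - a - (a + b) x) p`, characterized by
`(w_{a,b} p)' = w_{a-1,b-1} R_{a,b} p` for the Jacobi weights `w`. -/
noncomputable def raisingOp (a b : ℝ) : ℝ[X] →ₗ[ℝ] ℝ[X] :=
  LinearMap.mulLeft ℝ (1 - X ^ 2) ∘ₗ derivative + LinearMap.mulLeft ℝ (C (b - a) - C (a + b) * X)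

/-- The polynomial factor of the `k`-th derivative of the Jacobi weight. -/
noncomputable def rodriguesPoly (a b : ℝ) : ℕ → ℝ[X]
  | 0 => 1
  | k + 1 => raisingOp (a - k) (b - k) (rodriguesPoly a b k)

/-- The Jacobi polynomial as an element of `ℝ[X]`. -/
noncomputable def jacobiPoly (a b : ℝ) (n : ℕ) : ℝ[X] :=
  ((-1 : ℝ) ^ n / ((2 : ℝ) ^ n * (n.factorial : ℝ))) • rodriguesPoly (a + n) (b + n) n

variable (a b : ℝ) {x : ℝ}

lemma one_sub_pos (hx : x ∈ Ioo (-1) 1) : 0 < 1 - x := sub_pos.mpr hx.2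

lemma one_add_pos (hx : x ∈ Ioo (-1) 1) : 0 < 1 + x := by linarith [hx.1]

lemma jacobiWeight_pos (hx : x ∈ Ioo (-1) 1) : 0 < jacobiWeight a b x :=
  mul_pos (rpow_pos_of_pos (one_sub_pos hx) a) (rpow_pos_of_pos (one_add_pos hx) b)

lemma jacobiWeight_nonneg (hx : x ∈ Icc (-1) 1) : 0 ≤ jacobiWeight a b x :=
  mul_nonneg (rpow_nonneg (sub_nonneg.mpr hx.2) a) (rpow_nonneg (by linarith [hx.1]) b)

lemma jacobiWeight_add (c d : ℝ) (hx : x ∈ Ioo (-1) 1) :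
    jacobiWeight (a + c) (b + d) x = jacobiWeight a b x * jacobiWeight c d x := by
  rw [jacobiWeight, rpow_add (one_sub_pos hx), rpow_add (one_add_pos hx), jacobiWeight,
    jacobiWeight, mul_mul_mul_comm]

lemma jacobiWeight_one_one (x : ℝ) : jacobiWeight 1 1 x = 1 - x ^ 2 := by
  rw [jacobiWeight, rpow_one, rpow_one]; ring

lemma jacobiWeight_succ (hx : x ∈ Ioo (-1) 1) :
    jacobiWeight (a + 1) (b + 1) x = jacobiWeight a b x * (1 - x ^ 2) := by
  rw [jacobiWeight_add a b 1 1 hx, jacobiWeight_one_one]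

lemma continuousOn_jacobiWeight : ContinuousOn (jacobiWeight a b) (Ioo (-1) 1) :=
  ((continuousOn_const.sub continuousOn_id).rpow_const fun _ hx => .inl (one_sub_pos hx).ne').mul
    ((continuousOn_const.add continuousOn_id).rpow_const fun _ hx => .inl (one_add_pos hx).ne')

lemma raisingOp_apply (p : ℝ[X]) :
    raisingOp a b p = (1 - X ^ 2) * derivative p + (C (b - a) - C (a + b) * X) * p := rfl

lemma eval_raisingOp (x : ℝ) (p : ℝ[X]) : (raisingOp a b p).eval x =
    (1 - x ^ 2) * (derivative p).eval x + (b - a - (a + b) * x) * p.eval x := by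
  simp only [raisingOp_apply, eval_add, eval_mul, eval_sub, eval_one, eval_pow, eval_X, eval_C]

lemma hasDerivAt_jacobiWeight_mul (p : ℝ[X]) (hx : x ∈ Ioo (-1) 1) :
    HasDerivAt (fun y => jacobiWeight a b y * p.eval y)
      (jacobiWeight (a - 1) (b - 1) x * (raisingOp a b p).eval x) x := by
  have hsub := one_sub_pos hx
  have hadd := one_add_pos hx
  have hderiv := ((((hasDerivAt_id x).const_sub 1).rpow_const (p := a) (.inl hsub.ne')).mul
    (((hasDerivAt_id x).const_add 1).rpow_const (p := b) (.inl hadd.ne'))).mul (p.hasDerivAt x)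
  refine hderiv.congr_deriv ?_
  simp only [Pi.mul_apply, id, jacobiWeight, eval_raisingOp, rpow_sub_one hsub.ne',
    rpow_sub_one hadd.ne']
  field_simp
  ring

lemma iteratedDeriv_jacobiWeight (k : ℕ) (hx : x ∈ Ioo (-1) 1) :
    iteratedDeriv k (jacobiWeight a b) x =
      jacobiWeight (a - k) (b - k) x * (rodriguesPoly a b k).eval x := by
  induction k generalizing x with
  | zero => simp [rodriguesPoly]
  | succ k ih =>
    have hev : iteratedDeriv k (jacobiWeight a b) =ᶠ[𝓝 x]
        fun y => jacobiWeight (a - k) (b - k) y * (rodriguesPoly a b k).eval y :=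
      eventually_of_mem (isOpen_Ioo.mem_nhds hx) fun y hy => ih hy
    rw [iteratedDeriv_succ, hev.deriv_eq, (hasDerivAt_jacobiWeight_mul _ _ _ hx).deriv,
      rodriguesPoly, sub_sub, sub_sub, Nat.cast_succ]

lemma jacobiP_eq_eval (n : ℕ) (hx : x ∈ Ioo (-1) 1) :
    jacobiP a b n x = (jacobiPoly a b n).eval x := by
  have hrod := iteratedDeriv_jacobiWeight (a + n) (b + n) n hx
  have hweight : jacobiWeight (-a) (-b) x * jacobiWeight a b x = 1 := by
    rw [← jacobiWeight_add _ _ _ _ hx, neg_add_cancel, neg_add_cancel, jacobiWeight, rpow_zero,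
      rpow_zero, one_mul]
  rw [add_sub_cancel_right, add_sub_cancel_right] at hrod
  change _ * _ * _ * iteratedDeriv n (jacobiWeight (a + n) (b + n)) x = _
  rw [hrod, jacobiPoly, eval_smul, smul_eq_mul, mul_assoc _ _ ((1 + x) ^ (-b)), ← jacobiWeight,
    mul_assoc, ← mul_assoc (jacobiWeight _ _ _), hweight, one_mul]

lemma derivative_raisingOp (p : ℝ[X]) : derivative (raisingOp a b p) =
    raisingOp (a + 1) (b + 1) (derivative p) - C (a + b) * p := by
  simp only [raisingOp_apply, derivative_add, derivative_mul, derivative_sub, derivative_one,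
    derivative_X_pow, derivative_C, derivative_X, C_add, C_sub, C_1, Nat.cast_ofNat, map_ofNat]
  ring

lemma coeff_raisingOp_succ (p : ℝ[X]) (k : ℕ) : (raisingOp a b p).coeff (k + 1) =
    (k + 2) * p.coeff (k + 2) + (b - a) * p.coeff (k + 1) - (a + b + k) * p.coeff k := by
  have heuler : (X * derivative p).coeff k = k * p.coeff k := by
    cases k with
    | zero => simp
    | succ k => rw [coeff_X_mul, coeff_derivative, Nat.cast_succ, mul_comm]
  have hexp : raisingOp a b p =
      derivative p - X * (X * derivative p) + (C (b - a) * p - C (a + b) * (X * p)) := by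
    rw [raisingOp_apply]; ring
  rw [hexp, coeff_add, coeff_sub, coeff_sub, coeff_X_mul, heuler, coeff_C_mul, coeff_C_mul,
    coeff_X_mul, coeff_derivative]
  push_cast
  ring

variable {a b}

lemma degree_raisingOp {p : ℝ[X]} {m : ℕ} (hp : p.degree = m) (hab : a + b + m ≠ 0) :
    (raisingOp a b p).degree = (m + 1 : ℕ) := by
  have hzero (k : ℕ) (hk : m < k) : p.coeff k = 0 :=
    coeff_eq_zero_of_degree_lt (hp ▸ Nat.cast_lt.mpr hk)
  refine le_antisymm ((degree_le_iff_coeff_zero _ _).mpr fun k hk => ?_)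
    (le_degree_of_ne_zero ?_)
  · obtain ⟨k, rfl⟩ := Nat.exists_eq_add_one_of_ne_zero (Nat.ne_zero_of_lt (Nat.cast_lt.mp hk))
    have hk : m + 1 < k + 1 := Nat.cast_lt.mp hk
    rw [coeff_raisingOp_succ, hzero k (by lia), hzero _ (by lia), hzero _ (by lia)]
    simp
  · rw [coeff_raisingOp_succ, hzero _ (by lia), hzero _ (by lia), mul_zero, mul_zero, zero_add,
      zero_sub, neg_ne_zero]
    exact mul_ne_zero hab (coeff_ne_zero_of_eq_degree hp)

lemma degree_rodriguesPoly (k : ℕ) (hab : ∀ j < k, a + b ≠ j) :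
    (rodriguesPoly a b k).degree = k := by
  induction k with
  | zero => simp [rodriguesPoly]
  | succ k ih =>
    refine degree_raisingOp (ih fun j hj => hab j (hj.trans k.lt_succ_self)) fun h => ?_
    exact hab k k.lt_succ_self (by linarith)

lemma degree_jacobiPoly (ha : -1 < a) (hb : -1 < b) (n : ℕ) : (jacobiPoly a b n).degree = n := by
  rw [jacobiPoly, smul_eq_C_mul, degree_C_mul (by positivity)]
  refine degree_rodriguesPoly n fun j hj => ne_of_gt ?_
  have : (j : ℝ) + 1 ≤ n := by exact_mod_cast hj
  have : (0 : ℝ) ≤ j := j.cast_nonneg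
  linarith

end Rodrigues

/-! ### The Jacobi operator -/

section JacobiOperator

/-- The Jacobi differential operator
`-(1 - x²) ∂² - (b - a - (a + b + 2) x) ∂ + ((a + b + 1) / 2)²`, shifted so that its eigenvalues
are the exponents `(n + (a + b + 1) / 2)²` of the heat kernel. -/
noncomputable def jacobiOp (a b : ℝ) : ℝ[X] →ₗ[ℝ] ℝ[X] :=
  ((a + b + 1) / 2) ^ 2 • LinearMap.id - raisingOp (a + 1) (b + 1) ∘ₗ derivative

/-- The `n`-th eigenvalue of the shifted Jacobi operator. -/
noncomputable def jacobiEigenvalue (a b : ℝ) (n : ℕ) : ℝ := (n + (a + b + 1) / 2) ^ 2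

variable (a b : ℝ)

lemma jacobiEigenvalue_nonneg (n : ℕ) : 0 ≤ jacobiEigenvalue a b n := sq_nonneg _

lemma jacobiOp_apply (p : ℝ[X]) : jacobiOp a b p =
    ((a + b + 1) / 2) ^ 2 • p - raisingOp (a + 1) (b + 1) (derivative p) := rfl

lemma eval_jacobiOp (x : ℝ) (p : ℝ[X]) : (jacobiOp a b p).eval x =
    ((a + b + 1) / 2) ^ 2 * p.eval x - ((1 - x ^ 2) * (derivative (derivative p)).eval x +
      (b - a - (a + b + 2) * x) * (derivative p).eval x) := by
  rw [jacobiOp_apply, eval_sub, eval_smul, eval_raisingOp, smul_eq_mul]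
  ring

lemma jacobiOp_raisingOp (p : ℝ[X]) :
    jacobiOp (a - 1) (b - 1) (raisingOp a b p) = raisingOp a b (jacobiOp a b p) := by
  rw [jacobiOp_apply, jacobiOp_apply, derivative_raisingOp, sub_add_cancel, sub_add_cancel,
    ← smul_eq_C_mul, map_sub, map_sub, map_smul, map_smul]
  module

lemma jacobiOp_rodriguesPoly (k : ℕ) : jacobiOp (a - k) (b - k) (rodriguesPoly a b k) =
    ((a + b + 1) / 2) ^ 2 • rodriguesPoly a b k := by
  induction k with
  | zero => simp [jacobiOp_apply, rodriguesPoly]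
  | succ k ih =>
    rw [Nat.cast_succ, ← sub_sub, ← sub_sub, rodriguesPoly, jacobiOp_raisingOp, ih, map_smul]

lemma jacobiOp_jacobiPoly (n : ℕ) :
    jacobiOp a b (jacobiPoly a b n) = jacobiEigenvalue a b n • jacobiPoly a b n := by
  have hrod := jacobiOp_rodriguesPoly (a + n) (b + n) n
  rw [add_sub_cancel_right, add_sub_cancel_right] at hrod
  rw [jacobiPoly, map_smul, hrod, smul_comm, jacobiEigenvalue]
  ring_nf

variable {a b}

lemma jacobiEigenvalue_injective (ha : -1 < a) (hb : -1 < b) :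
    Function.Injective (jacobiEigenvalue a b) := by
  intro m n hmn
  by_contra hne
  rcases sq_eq_sq_iff_eq_or_eq_neg.mp hmn with h | h
  · exact hne (by exact_mod_cast add_right_cancel h)
  · have : (1 : ℝ) ≤ m + n := by exact_mod_cast (show 1 ≤ m + n by lia)
    linarith

end JacobiOperator

/-! ### The weighted inner product -/

section InnerProduct

/-- The inner product of `L²((1 - x)ᵃ (1 + x)ᵇ dx)` on polynomials. -/
noncomputable def jacobiInner (a b : ℝ) (p q : ℝ[X]) : ℝ :=
  ∫ x in Icc (-1) 1, jacobiWeight a b x * (p.eval x * q.eval x)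

variable {a b : ℝ}

lemma integrableOn_jacobiWeight (ha : -1 < a) (hb : -1 < b) :
    IntegrableOn (jacobiWeight a b) (Icc (-1) 1) := by
  rw [← intervalIntegrable_iff_integrableOn_Icc_of_le (by norm_num)]
  refine IntervalIntegrable.trans (b := 0) ?_ ?_
  · have hsing : IntervalIntegrable (fun x : ℝ => (1 + x) ^ b) volume (-1) 0 := by
      simpa using (intervalIntegral.intervalIntegrable_rpow' (a := 0) (b := 1) hb).comp_add_left 1
    refine hsing.continuousOn_mul (ContinuousOn.rpow_const (by fun_prop) fun x hx => .inl ?_)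
    rw [uIcc_of_le (by norm_num)] at hx
    linarith [hx.2]
  · have hsing : IntervalIntegrable (fun x : ℝ => (1 - x) ^ a) volume 0 1 := by
      simpa using (intervalIntegral.intervalIntegrable_rpow' (a := 1) (b := 0) ha).comp_sub_left 1
    refine hsing.mul_continuousOn (ContinuousOn.rpow_const (by fun_prop) fun x hx => .inl ?_)
    rw [uIcc_of_le (by norm_num)] at hx
    linarith [hx.1]

lemma integrableOn_jacobiWeight_mul (ha : -1 < a) (hb : -1 < b) {f : ℝ → ℝ}
    (hf : ContinuousOn f (Icc (-1) 1)) :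
    IntegrableOn (fun x => jacobiWeight a b x * f x) (Icc (-1) 1) :=
  (integrableOn_jacobiWeight ha hb).mul_continuousOn hf isCompact_Icc

lemma continuous_one_sub_rpow {e : ℝ} (he : 0 ≤ e) : Continuous fun x : ℝ => (1 - x) ^ e :=
  (continuous_const.sub continuous_id).rpow_const fun _ => .inr he

lemma continuous_jacobiWeight (ha : 0 ≤ a) (hb : 0 ≤ b) : Continuous (jacobiWeight a b) :=
  (continuous_one_sub_rpow ha).mul
    ((continuous_const.add continuous_id).rpow_const fun _ => .inr hb)

lemma integral_jacobiWeight_mul_raisingOp (ha : -1 < a) (hb : -1 < b) (p : ℝ[X]) :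
    ∫ x in Icc (-1) 1, jacobiWeight a b x * (raisingOp (a + 1) (b + 1) p).eval x = 0 := by
  have hint := integrableOn_jacobiWeight_mul ha hb (raisingOp (a + 1) (b + 1) p).continuousOn
  have hcont := (continuous_jacobiWeight (a := a + 1) (b := b + 1) (by linarith)
    (by linarith)).mul p.continuous
  have hright : jacobiWeight (a + 1) (b + 1) 1 = 0 := by
    rw [jacobiWeight, sub_self, zero_rpow (by linarith), zero_mul]
  have hleft : jacobiWeight (a + 1) (b + 1) (-1) = 0 := by
    rw [jacobiWeight, add_neg_cancel, zero_rpow (by linarith), mul_zero]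
  have hftc := intervalIntegral.integral_eq_sub_of_hasDerivAt_of_le (by norm_num)
    hcont.continuousOn (fun x hx => hasDerivAt_jacobiWeight_mul (a + 1) (b + 1) p hx)
  simp only [add_sub_cancel_right, Pi.mul_apply, hright, hleft, zero_mul, sub_self] at hftc
  rw [← hftc ((intervalIntegrable_iff_integrableOn_Icc_of_le (by norm_num)).mpr hint),
    intervalIntegral.integral_of_le (by norm_num), ← integral_Icc_eq_integral_Ioc]

lemma jacobiInner_comm (p q : ℝ[X]) : jacobiInner a b p q = jacobiInner a b q p := by
  simp only [jacobiInner, mul_comm (eval _ p)]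

lemma jacobiInner_smul_left (c : ℝ) (p q : ℝ[X]) :
    jacobiInner a b (c • p) q = c * jacobiInner a b p q := by
  rw [jacobiInner, jacobiInner, ← integral_const_mul]
  congr 1 with x
  rw [eval_smul, smul_eq_mul]
  ring

lemma integrableOn_jacobiInner (ha : -1 < a) (hb : -1 < b) (p q : ℝ[X]) :
    IntegrableOn (fun x => jacobiWeight a b x * (p.eval x * q.eval x)) (Icc (-1) 1) :=
  integrableOn_jacobiWeight_mul ha hb (p.continuousOn.mul q.continuousOn)

lemma jacobiInner_add_left (ha : -1 < a) (hb : -1 < b) (p₁ p₂ q : ℝ[X]) :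
    jacobiInner a b (p₁ + p₂) q = jacobiInner a b p₁ q + jacobiInner a b p₂ q := by
  rw [jacobiInner, jacobiInner, jacobiInner, ← integral_add (integrableOn_jacobiInner ha hb p₁ q)
    (integrableOn_jacobiInner ha hb p₂ q)]
  simp only [eval_add, add_mul, mul_add]

lemma jacobiInner_self_pos (ha : -1 < a) (hb : -1 < b) {p : ℝ[X]} (hp : p ≠ 0) :
    0 < jacobiInner a b p p := by
  have hnonneg : ∀ᵐ x ∂volume.restrict (Icc (-1 : ℝ) 1),
      0 ≤ jacobiWeight a b x * (p.eval x * p.eval x) :=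
    ae_restrict_of_forall_mem measurableSet_Icc fun x hx =>
      mul_nonneg (jacobiWeight_nonneg a b hx) (mul_self_nonneg _)
  rw [jacobiInner, setIntegral_pos_iff_support_of_nonneg_ae hnonneg
    (integrableOn_jacobiInner ha hb p p)]
  have hsub : Ioo (-1) 1 \ {x | p.IsRoot x} ⊆ (Function.support fun x =>
      jacobiWeight a b x * (p.eval x * p.eval x)) ∩ Icc (-1) 1 := fun x hx =>
    ⟨mul_ne_zero (jacobiWeight_pos a b hx.1).ne' (mul_self_ne_zero.mpr hx.2),
      Ioo_subset_Icc_self hx.1⟩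
  refine lt_of_lt_of_le ?_ (measure_mono hsub)
  rw [measure_sdiff_null ((finite_setOfPred_isRoot hp).measure_zero volume), Real.volume_Ioo]
  norm_num

lemma jacobiInner_raisingOp_left (ha : -1 < a) (hb : -1 < b) (p q : ℝ[X]) :
    jacobiInner a b (raisingOp (a + 1) (b + 1) p) q =
      -jacobiInner (a + 1) (b + 1) p (derivative q) := by
  have hleibniz : raisingOp (a + 1) (b + 1) (p * q) =
      raisingOp (a + 1) (b + 1) p * q + (1 - X ^ 2) * (p * derivative q) := by
    simp only [raisingOp_apply, derivative_mul]; ring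
  have hweight : ∫ x in Icc (-1) 1, jacobiWeight a b x *
      ((1 - X ^ 2) * (p * derivative q)).eval x = jacobiInner (a + 1) (b + 1) p (derivative q) := by
    rw [jacobiInner, integral_Icc_eq_integral_Ioo, integral_Icc_eq_integral_Ioo]
    refine setIntegral_congr_fun measurableSet_Ioo fun x hx => ?_
    simp only [jacobiWeight_succ a b hx, eval_mul, eval_sub, eval_one, eval_pow, eval_X, mul_assoc]
  have hzero := integral_jacobiWeight_mul_raisingOp ha hb (p * q)
  simp only [hleibniz, eval_add, mul_add] at hzero
  rw [integral_add (integrableOn_jacobiWeight_mul ha hb (Polynomial.continuousOn _))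
    (integrableOn_jacobiWeight_mul ha hb (Polynomial.continuousOn _)), hweight] at hzero
  simp only [eval_mul] at hzero
  exact eq_neg_of_add_eq_zero_left hzero

lemma jacobiInner_jacobiOp_left (ha : -1 < a) (hb : -1 < b) (p q : ℝ[X]) :
    jacobiInner a b (jacobiOp a b p) q = ((a + b + 1) / 2) ^ 2 * jacobiInner a b p q +
      jacobiInner (a + 1) (b + 1) (derivative p) (derivative q) := by
  rw [jacobiOp_apply, sub_eq_add_neg, ← neg_one_smul ℝ, jacobiInner_add_left ha hb,
    jacobiInner_smul_left, jacobiInner_smul_left, jacobiInner_raisingOp_left ha hb]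
  ring

lemma jacobiInner_jacobiPoly_of_ne (ha : -1 < a) (hb : -1 < b) {m n : ℕ} (hmn : m ≠ n) :
    jacobiInner a b (jacobiPoly a b m) (jacobiPoly a b n) = 0 := by
  have hsymm : jacobiInner a b (jacobiOp a b (jacobiPoly a b m)) (jacobiPoly a b n) =
      jacobiInner a b (jacobiOp a b (jacobiPoly a b n)) (jacobiPoly a b m) := by
    rw [jacobiInner_jacobiOp_left ha hb, jacobiInner_jacobiOp_left ha hb,
      jacobiInner_comm (jacobiPoly a b m), jacobiInner_comm (derivative (jacobiPoly a b m))]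
  rw [jacobiOp_jacobiPoly, jacobiOp_jacobiPoly, jacobiInner_smul_left, jacobiInner_smul_left,
    jacobiInner_comm (jacobiPoly a b n)] at hsymm
  by_contra hne
  exact hmn (jacobiEigenvalue_injective ha hb (mul_right_cancel₀ hne hsymm))

lemma hJacobi_eq_jacobiInner (n : ℕ) :
    hJacobi a b n = jacobiInner a b (jacobiPoly a b n) (jacobiPoly a b n) := by
  rw [hJacobi, jacobiInner, integral_Icc_eq_integral_Ioo, integral_Icc_eq_integral_Ioo]
  refine setIntegral_congr_fun measurableSet_Ioo fun x hx => ?_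
  simp only [jacobiP_eq_eval a b n hx, jacobiWeight]
  ring

lemma hJacobi_pos (ha : -1 < a) (hb : -1 < b) (n : ℕ) : 0 < hJacobi a b n := by
  rw [hJacobi_eq_jacobiInner]
  refine jacobiInner_self_pos ha hb fun hzero => ?_
  simpa [hzero] using degree_jacobiPoly ha hb n

lemma exists_mul_setIntegral_le_energy (ha : -1 < a) (hb : -1 < b) {l u : ℝ} (hlu : l ≤ u)
    (hsub : Icc l u ⊆ Ioo (-1) 1) :
    ∃ c, 0 < c ∧ ∀ p : ℝ[X], c * ∫ x in Icc l u, (p.eval x ^ 2 + (derivative p).eval x ^ 2) ≤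
      jacobiInner a b p p + jacobiInner (a + 1) (b + 1) (derivative p) (derivative p) := by
  obtain ⟨z, hz, hmin⟩ := isCompact_Icc.exists_isMinOn (nonempty_Icc.mpr hlu)
    ((continuousOn_jacobiWeight (a + 1) (b + 1)).mono hsub)
  refine ⟨jacobiWeight (a + 1) (b + 1) z, jacobiWeight_pos _ _ (hsub hz), fun p => ?_⟩
  have hint := integrableOn_jacobiInner ha hb p p
  have hint' := integrableOn_jacobiInner (a := a + 1) (b := b + 1) (by linarith) (by linarith)
    (derivative p) (derivative p)
  have hsub' : Icc l u ⊆ Icc (-1) 1 := hsub.trans Ioo_subset_Icc_self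
  rw [jacobiInner, jacobiInner, ← integral_add hint hint', ← integral_const_mul]
  refine (setIntegral_mono_on (Continuous.integrableOn_Icc (by fun_prop))
    ((hint.add hint').mono_set hsub') measurableSet_Icc fun x hx => ?_).trans
      (setIntegral_mono_set (hint.add hint')
        (ae_restrict_of_forall_mem measurableSet_Icc fun x hx =>
          add_nonneg (mul_nonneg (jacobiWeight_nonneg _ _ hx) (mul_self_nonneg _))
            (mul_nonneg (jacobiWeight_nonneg _ _ hx) (mul_self_nonneg _))) hsub'.eventuallyLE)
  have hzx : jacobiWeight (a + 1) (b + 1) z ≤ jacobiWeight (a + 1) (b + 1) x := hmin hx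
  have hle : jacobiWeight (a + 1) (b + 1) x ≤ jacobiWeight a b x := by
    rw [jacobiWeight_succ a b (hsub hx)]
    exact mul_le_of_le_one_right (jacobiWeight_pos a b (hsub hx)).le
      (sub_le_self _ (sq_nonneg x))
  rw [mul_add, sq, sq]
  exact add_le_add (mul_le_mul_of_nonneg_right (hzx.trans hle) (mul_self_nonneg _))
    (mul_le_mul_of_nonneg_right hzx (mul_self_nonneg _))

lemma exists_sq_eval_le_mul_energy (ha : -1 < a) (hb : -1 < b) {l u : ℝ} (hlu : l < u)
    (hsub : Icc l u ⊆ Ioo (-1) 1) :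
    ∃ C, 0 ≤ C ∧ ∀ p : ℝ[X], ∀ x ∈ Icc l u, p.eval x ^ 2 ≤
      C * (jacobiInner a b p p + jacobiInner (a + 1) (b + 1) (derivative p) (derivative p)) := by
  obtain ⟨c, hc, henergy⟩ := exists_mul_setIntegral_le_energy ha hb hlu.le hsub
  have hlen : 0 < u - l := sub_pos.mpr hlu
  refine ⟨(1 + (u - l)) / ((u - l) * c), by positivity, fun p x hx => ?_⟩
  have hsobolev := length_mul_sq_le_setIntegral hlu.le (fun y _ => p.hasDerivAt y)
    (derivative p).continuousOn hx
  rw [div_mul_eq_mul_div, le_div_iff₀ (by positivity)]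
  calc p.eval x ^ 2 * ((u - l) * c) = c * ((u - l) * p.eval x ^ 2) := by ring
    _ ≤ c * ((1 + (u - l)) * ∫ y in Icc l u, (p.eval y ^ 2 + (derivative p).eval y ^ 2)) :=
        mul_le_mul_of_nonneg_left hsobolev hc.le
    _ = (1 + (u - l)) * (c * ∫ y in Icc l u, (p.eval y ^ 2 + (derivative p).eval y ^ 2)) := by
        ring
    _ ≤ _ := mul_le_mul_of_nonneg_left (henergy p) (by positivity)

end InnerProduct

/-! ### The orthonormal basis and spectral multipliers -/

section Multipliers

/-- The Jacobi polynomial normalized in `L²((1 - x)ᵃ (1 + x)ᵇ dx)`. -/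
noncomputable def orthonormalJacobi (a b : ℝ) (n : ℕ) : ℝ[X] :=
  hJacobi a b n ^ (-(1 / 2 : ℝ)) • jacobiPoly a b n

lemma jacobiOp_orthonormalJacobi (a b : ℝ) (n : ℕ) : jacobiOp a b (orthonormalJacobi a b n) =
    jacobiEigenvalue a b n • orthonormalJacobi a b n := by
  rw [orthonormalJacobi, map_smul, jacobiOp_jacobiPoly, smul_comm]

variable {a b : ℝ}

lemma jacobiInner_orthonormalJacobi (ha : -1 < a) (hb : -1 < b) (m n : ℕ) :
    jacobiInner a b (orthonormalJacobi a b m) (orthonormalJacobi a b n) =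
      if m = n then 1 else 0 := by
  rw [orthonormalJacobi, orthonormalJacobi, jacobiInner_smul_left, jacobiInner_comm,
    jacobiInner_smul_left]
  split_ifs with hmn
  · have hpos := hJacobi_pos ha hb n
    rw [hmn, ← hJacobi_eq_jacobiInner, ← mul_assoc, ← rpow_add hpos, ← rpow_add_one hpos.ne']
    norm_num
  · rw [jacobiInner_jacobiPoly_of_ne ha hb (Ne.symm hmn), mul_zero, mul_zero]

lemma exists_sq_eval_orthonormalJacobi_le (ha : -1 < a) (hb : -1 < b) {l u : ℝ} (hlu : l < u)
    (hsub : Icc l u ⊆ Ioo (-1) 1) : ∃ C, ∀ n, ∀ x ∈ Icc l u,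
      (orthonormalJacobi a b n).eval x ^ 2 ≤ C * (1 + jacobiEigenvalue a b n) := by
  obtain ⟨C, hC, hbound⟩ := exists_sq_eval_le_mul_energy ha hb hlu hsub
  refine ⟨C, fun n x hx => (hbound _ x hx).trans (mul_le_mul_of_nonneg_left ?_ hC)⟩
  have henergy := jacobiInner_jacobiOp_left ha hb (orthonormalJacobi a b n)
    (orthonormalJacobi a b n)
  rw [jacobiOp_orthonormalJacobi, jacobiInner_smul_left, jacobiInner_orthonormalJacobi ha hb,
    if_pos rfl] at henergy
  rw [jacobiInner_orthonormalJacobi ha hb, if_pos rfl]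
  linarith [sq_nonneg ((a + b + 1) / 2)]

/-- The orthonormal Jacobi polynomials as a linear basis of `ℝ[X]`. -/
noncomputable def jacobiBasis (ha : -1 < a) (hb : -1 < b) : Module.Basis ℕ ℝ ℝ[X] :=
  Polynomial.Sequence.basis
    ⟨orthonormalJacobi a b, fun n => by
      rw [orthonormalJacobi, smul_eq_C_mul,
        degree_C_mul (rpow_pos_of_pos (hJacobi_pos ha hb n) _).ne', degree_jacobiPoly ha hb]⟩
    fun n => (leadingCoeff_ne_zero.mpr (Sequence.ne_zero _ n)).isUnit

lemma jacobiBasis_apply (ha : -1 < a) (hb : -1 < b) (n : ℕ) :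
    jacobiBasis ha hb n = orthonormalJacobi a b n := by
  rw [jacobiBasis, Sequence.basis_eq_self]

lemma jacobiBasis_repr (ha : -1 < a) (hb : -1 < b) (p : ℝ[X]) (n : ℕ) :
    (jacobiBasis ha hb).repr p n = jacobiInner a b p (orthonormalJacobi a b n) := by
  let innerRight : ℝ[X] →ₗ[ℝ] ℝ :=
    { toFun := fun q => jacobiInner a b q (orthonormalJacobi a b n)
      map_add' := fun q₁ q₂ => jacobiInner_add_left ha hb q₁ q₂ _
      map_smul' := fun c q => jacobiInner_smul_left c q _ }
  have hext : (jacobiBasis ha hb).coord n = innerRight := by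
    refine (jacobiBasis ha hb).ext fun m => ?_
    rw [Module.Basis.coord_apply, Module.Basis.repr_self, Finsupp.single_apply, jacobiBasis_apply]
    exact (jacobiInner_orthonormalJacobi ha hb m n).symm
  exact LinearMap.congr_fun hext p

/-- The operator with symbol `m`: it multiplies the `n`-th Jacobi polynomial by `m n`. -/
noncomputable def jacobiMultiplier (ha : -1 < a) (hb : -1 < b) (m : ℕ → ℝ) : Module.End ℝ ℝ[X] :=
  (jacobiBasis ha hb).constr ℝ fun n => m n • orthonormalJacobi a b n

lemma jacobiMultiplier_orthonormalJacobi (ha : -1 < a) (hb : -1 < b) (m : ℕ → ℝ) (n : ℕ) :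
    jacobiMultiplier ha hb m (orthonormalJacobi a b n) = m n • orthonormalJacobi a b n := by
  rw [← jacobiBasis_apply ha hb, jacobiMultiplier, Module.Basis.constr_basis, jacobiBasis_apply]

lemma eval_jacobiMultiplier (ha : -1 < a) (hb : -1 < b) (m : ℕ → ℝ) (p : ℝ[X]) (x : ℝ) :
    (jacobiMultiplier ha hb m p).eval x = ∑ n ∈ ((jacobiBasis ha hb).repr p).support,
      m n * (orthonormalJacobi a b n).eval x * jacobiInner a b p (orthonormalJacobi a b n) := by
  rw [jacobiMultiplier, Module.Basis.constr_apply, Finsupp.sum, eval_finsetSum]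
  refine Finset.sum_congr rfl fun n _ => ?_
  rw [eval_smul, eval_smul, jacobiBasis_repr, smul_eq_mul, smul_eq_mul, mul_comm]

lemma hasSum_jacobiMultiplier (ha : -1 < a) (hb : -1 < b) (m : ℕ → ℝ) (p : ℝ[X]) (x : ℝ) :
    HasSum (fun n => m n * (orthonormalJacobi a b n).eval x *
      jacobiInner a b p (orthonormalJacobi a b n)) ((jacobiMultiplier ha hb m p).eval x) := by
  rw [eval_jacobiMultiplier]
  refine hasSum_sum_of_ne_finset_zero fun n hn => ?_
  rw [← jacobiBasis_repr ha hb, Finsupp.notMem_support_iff.mp hn, mul_zero]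

lemma tendsto_eval_jacobiMultiplier (ha : -1 < a) (hb : -1 < b) {M : ℕ → ℕ → ℝ} {m : ℕ → ℝ}
    (hM : ∀ n, Tendsto (fun k => M k n) atTop (𝓝 (m n))) (p : ℝ[X]) (x : ℝ) :
    Tendsto (fun k => (jacobiMultiplier ha hb (M k) p).eval x) atTop
      (𝓝 ((jacobiMultiplier ha hb m p).eval x)) := by
  simp only [eval_jacobiMultiplier]
  exact tendsto_finsetSum _ fun n _ => ((hM n).mul_const _).mul_const _

lemma jacobiMultiplier_pow (ha : -1 < a) (hb : -1 < b) (m : ℕ → ℝ) (k : ℕ) :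
    jacobiMultiplier ha hb m ^ k = jacobiMultiplier ha hb (m ^ k) := by
  refine (jacobiBasis ha hb).ext fun n => ?_
  rw [jacobiBasis_apply, jacobiMultiplier_orthonormalJacobi, Pi.pow_apply]
  induction k with
  | zero => simp
  | succ k ih =>
    rw [pow_succ, Module.End.mul_apply, jacobiMultiplier_orthonormalJacobi, map_smul, ih,
      smul_smul, pow_succ']

/-- The resolvent `(1 + s J)⁻¹` of the shifted Jacobi operator `J`. -/
noncomputable def jacobiResolvent (ha : -1 < a) (hb : -1 < b) (s : ℝ) : Module.End ℝ ℝ[X] :=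
  jacobiMultiplier ha hb fun n => (1 + s * jacobiEigenvalue a b n)⁻¹

/-- The heat semigroup `exp (-t J)` of the shifted Jacobi operator `J`. -/
noncomputable def jacobiHeat (ha : -1 < a) (hb : -1 < b) (t : ℝ) : Module.End ℝ ℝ[X] :=
  jacobiMultiplier ha hb fun n => exp (-t * jacobiEigenvalue a b n)

lemma jacobiResolvent_add_smul_jacobiOp (ha : -1 < a) (hb : -1 < b) {s : ℝ} (hs : 0 ≤ s)
    (p : ℝ[X]) :
    jacobiResolvent ha hb s p + s • jacobiOp a b (jacobiResolvent ha hb s p) = p := by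
  have hext : (1 + s • jacobiOp a b) ∘ₗ jacobiResolvent ha hb s = LinearMap.id := by
    refine (jacobiBasis ha hb).ext fun n => ?_
    have hne : 1 + s * jacobiEigenvalue a b n ≠ 0 :=
      (add_pos_of_pos_of_nonneg one_pos (mul_nonneg hs (jacobiEigenvalue_nonneg a b n))).ne'
    rw [jacobiBasis_apply, LinearMap.comp_apply, jacobiResolvent,
      jacobiMultiplier_orthonormalJacobi, map_smul, LinearMap.add_apply, Module.End.one_apply,
      LinearMap.smul_apply, jacobiOp_orthonormalJacobi, LinearMap.id_apply]
    match_scalars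
    field_simp
  exact LinearMap.congr_fun hext p

lemma tendsto_jacobiResolvent_pow (ha : -1 < a) (hb : -1 < b) (t : ℝ) (p : ℝ[X]) (x : ℝ) :
    Tendsto (fun k : ℕ => ((jacobiResolvent ha hb (t / k) ^ k) p).eval x) atTop
      (𝓝 ((jacobiHeat ha hb t p).eval x)) := by
  simp only [jacobiResolvent, jacobiMultiplier_pow]
  refine tendsto_eval_jacobiMultiplier ha hb (fun n => ?_) p x
  rw [neg_mul, Real.exp_neg]
  refine ((tendsto_one_add_div_pow_exp (t * jacobiEigenvalue a b n)).inv₀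
    (Real.exp_pos _).ne').congr fun k => ?_
  rw [Pi.pow_apply, inv_pow, div_mul_eq_mul_div]

end Multipliers

/-! ### Comparison of resolvents and semigroups -/

section Comparison

variable {a b s : ℝ}

lemma nonneg_of_add_mul_jacobiOp_nonneg (ha : -1 < a) (hb : -1 < b) (hs : 0 ≤ s)
    {w w' w'' : ℝ → ℝ} (hw : ContinuousOn w (Icc (-1) 1))
    (hneg : ∀ x ∈ Icc (-1) 1, w x < 0 →
      (∀ᶠ y in 𝓝 x, HasDerivAt w (w' y) y) ∧ HasDerivAt w' (w'' x) x ∧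
        0 ≤ w x + s * (((a + b + 1) / 2) ^ 2 * w x -
          ((1 - x ^ 2) * w'' x + (b - a - (a + b + 2) * x) * w' x))) :
    ∀ x ∈ Icc (-1) 1, 0 ≤ w x := by
  refine nonneg_on_Icc_of_neg_imp (σ := fun x => s * (1 - x ^ 2))
    (τ := fun x => s * (b - a - (a + b + 2) * x)) (w' := w') (w'' := w'') (by norm_num)
    (fun x hx => mul_nonneg hs (by nlinarith [hx.1, hx.2])) (by norm_num) (by norm_num)
    (mul_nonneg hs (by linarith)) (mul_nonpos_of_nonneg_of_nonpos hs (by linarith)) hw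
    fun x hx hwx => ?_
  obtain ⟨hderiv, hderiv', hop⟩ := hneg x hx hwx
  refine ⟨hderiv, hderiv', ?_⟩
  have hshift : s * ((a + b + 1) / 2) ^ 2 * w x ≤ 0 :=
    mul_nonpos_of_nonneg_of_nonpos (mul_nonneg hs (sq_nonneg _)) hwx.le
  linarith

lemma nonneg_of_add_smul_jacobiOp_nonneg (ha : -1 < a) (hb : -1 < b) (hs : 0 ≤ s) {p : ℝ[X]}
    (hp : ∀ x ∈ Icc (-1) 1, 0 ≤ (p + s • jacobiOp a b p).eval x) :
    ∀ x ∈ Icc (-1) 1, 0 ≤ p.eval x := by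
  refine nonneg_of_add_mul_jacobiOp_nonneg ha hb hs p.continuousOn fun x hx _ =>
    ⟨.of_forall fun y => p.hasDerivAt y, (derivative p).hasDerivAt x, ?_⟩
  simpa only [eval_add, eval_smul, smul_eq_mul, eval_jacobiOp] using hp x hx

/-- The operator `D_e p = (1 - x) p' - e p`, characterized by
`((1 - x)ᵉ p)' = (1 - x)ᵉ⁻¹ D_e p`. -/
noncomputable def twistedDeriv (e : ℝ) (p : ℝ[X]) : ℝ[X] := (1 - X) * derivative p - C e * p

lemma hasDerivAt_one_sub_rpow_mul (e : ℝ) (p : ℝ[X]) {x : ℝ} (hx : x < 1) :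
    HasDerivAt (fun y => (1 - y) ^ e * p.eval y)
      ((1 - x) ^ (e - 1) * (twistedDeriv e p).eval x) x := by
  have hsub : 1 - x ≠ 0 := (sub_pos.mpr hx).ne'
  refine ((((hasDerivAt_id x).const_sub 1).rpow_const (p := e) (.inl hsub)).mul
    (p.hasDerivAt x)).congr_deriv ?_
  simp only [id, twistedDeriv, eval_sub, eval_mul, eval_one, eval_X, eval_C, rpow_sub_one hsub]
  field_simp
  ring

lemma jacobiOp_one_sub_rpow_mul (a b e : ℝ) (p : ℝ[X]) {x : ℝ} (hx : x < 1) :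
    ((a + b + 1) / 2) ^ 2 * ((1 - x) ^ e * p.eval x) -
        ((1 - x ^ 2) * ((1 - x) ^ (e - 1 - 1) *
            (twistedDeriv (e - 1) (twistedDeriv e p)).eval x) +
          (b - a - (a + b + 2) * x) * ((1 - x) ^ (e - 1) * (twistedDeriv e p).eval x)) =
      (1 - x) ^ e * (jacobiOp (a + 2 * e) b p).eval x -
        2 * e * (a + e) / (1 - x) * ((1 - x) ^ e * p.eval x) := by
  have hsub : 1 - x ≠ 0 := (sub_pos.mpr hx).ne'
  have hderiv : derivative (twistedDeriv e p) =
      (1 - X) * derivative (derivative p) - C (1 + e) * derivative p := by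
    simp only [twistedDeriv, derivative_sub, derivative_mul, derivative_one, derivative_X,
      derivative_C, C_add, C_1]
    ring
  rw [twistedDeriv, hderiv, twistedDeriv, eval_jacobiOp, rpow_sub_one hsub, rpow_sub_one hsub]
  simp only [eval_sub, eval_mul, eval_one, eval_X, eval_C]
  field_simp
  ring

lemma one_sub_rpow_mul_le_of_add_smul_jacobiOp {e : ℝ} (ha : -1 < a) (hb : -1 < b) (hs : 0 ≤ s)
    (he : 0 < e) (hae : 0 ≤ a + e) {p q : ℝ[X]}
    (hp : ∀ x ∈ Icc (-1) 1, 0 ≤ p.eval x) (hq : 0 ≤ q.eval 1)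
    (hpq : ∀ x ∈ Icc (-1) 1, (1 - x) ^ e * (p + s • jacobiOp (a + 2 * e) b p).eval x ≤
      (q + s • jacobiOp a b q).eval x) :
    ∀ x ∈ Icc (-1) 1, (1 - x) ^ e * p.eval x ≤ q.eval x := by
  suffices hdiff : ∀ x ∈ Icc (-1) 1, 0 ≤ q.eval x - (1 - x) ^ e * p.eval x from
    fun x hx => sub_nonneg.mp (hdiff x hx)
  refine nonneg_of_add_mul_jacobiOp_nonneg ha hb hs
    (q.continuous.sub ((continuous_one_sub_rpow he.le).mul p.continuous)).continuousOn
    (w' := fun x => (derivative q).eval x - (1 - x) ^ (e - 1) * (twistedDeriv e p).eval x)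
    (w'' := fun x => (derivative (derivative q)).eval x -
      (1 - x) ^ (e - 1 - 1) * (twistedDeriv (e - 1) (twistedDeriv e p)).eval x)
    fun x hx hneg => ?_
  have hx1 : x < 1 := by
    refine lt_of_le_of_ne hx.2 ?_
    rintro rfl
    rw [sub_self, zero_rpow he.ne', zero_mul, sub_zero] at hneg
    exact hneg.not_ge hq
  refine ⟨?_, ((derivative q).hasDerivAt x).sub (hasDerivAt_one_sub_rpow_mul (e - 1) _ hx1), ?_⟩
  · filter_upwards [Iio_mem_nhds hx1] with y hy
    exact (q.hasDerivAt y).sub (hasDerivAt_one_sub_rpow_mul e p hy)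
  · have hsub : 0 < 1 - x := sub_pos.mpr hx1
    have hremainder : 0 ≤ s * (2 * e * (a + e) / (1 - x) * ((1 - x) ^ e * p.eval x)) :=
      mul_nonneg hs (mul_nonneg (by positivity) (mul_nonneg (by positivity) (hp x hx)))
    have hle := hpq x hx
    simp only [eval_add, eval_smul, smul_eq_mul, eval_jacobiOp a b x q] at hle
    linear_combination hle + hremainder + s * jacobiOp_one_sub_rpow_mul a b e p hx1

lemma jacobiResolvent_nonneg (ha : -1 < a) (hb : -1 < b) (hs : 0 ≤ s) {p : ℝ[X]}
    (hp : ∀ x ∈ Icc (-1) 1, 0 ≤ p.eval x) :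
    ∀ x ∈ Icc (-1) 1, 0 ≤ (jacobiResolvent ha hb s p).eval x := by
  refine nonneg_of_add_smul_jacobiOp_nonneg ha hb hs ?_
  rwa [jacobiResolvent_add_smul_jacobiOp ha hb hs]

lemma one_sub_rpow_mul_jacobiResolvent_le {e : ℝ} (ha : -1 < a) (hb : -1 < b)
    (hA : -1 < a + 2 * e) (hs : 0 ≤ s) (he : 0 < e) (hae : 0 ≤ a + e) {p q : ℝ[X]}
    (hp : ∀ x ∈ Icc (-1) 1, 0 ≤ p.eval x)
    (hpq : ∀ x ∈ Icc (-1) 1, (1 - x) ^ e * p.eval x ≤ q.eval x) :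
    ∀ x ∈ Icc (-1) 1,
      (1 - x) ^ e * (jacobiResolvent hA hb s p).eval x ≤ (jacobiResolvent ha hb s q).eval x := by
  have hq : ∀ x ∈ Icc (-1) 1, 0 ≤ q.eval x := fun x hx =>
    (mul_nonneg (rpow_nonneg (sub_nonneg.mpr hx.2) e) (hp x hx)).trans (hpq x hx)
  refine one_sub_rpow_mul_le_of_add_smul_jacobiOp ha hb hs he hae
    (jacobiResolvent_nonneg hA hb hs hp)
    (jacobiResolvent_nonneg ha hb hs hq 1 (right_mem_Icc.mpr (by norm_num))) ?_
  rwa [jacobiResolvent_add_smul_jacobiOp hA hb hs, jacobiResolvent_add_smul_jacobiOp ha hb hs]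

lemma one_sub_rpow_mul_jacobiResolvent_pow_le {e : ℝ} (ha : -1 < a) (hb : -1 < b)
    (hA : -1 < a + 2 * e) (hs : 0 ≤ s) (he : 0 < e) (hae : 0 ≤ a + e) {p q : ℝ[X]}
    (hp : ∀ x ∈ Icc (-1) 1, 0 ≤ p.eval x)
    (hpq : ∀ x ∈ Icc (-1) 1, (1 - x) ^ e * p.eval x ≤ q.eval x) (k : ℕ) :
    ∀ x ∈ Icc (-1) 1, (1 - x) ^ e * ((jacobiResolvent hA hb s ^ k) p).eval x ≤
      ((jacobiResolvent ha hb s ^ k) q).eval x := by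
  induction k generalizing p q with
  | zero => simpa using hpq
  | succ k ih =>
    simp only [pow_succ, Module.End.mul_apply]
    exact ih (jacobiResolvent_nonneg hA hb hs hp)
      (one_sub_rpow_mul_jacobiResolvent_le ha hb hA hs he hae hp hpq)

lemma one_sub_rpow_mul_jacobiHeat_le {e t : ℝ} (ha : -1 < a) (hb : -1 < b)
    (hA : -1 < a + 2 * e) (ht : 0 ≤ t) (he : 0 < e) (hae : 0 ≤ a + e) {p q : ℝ[X]}
    (hp : ∀ x ∈ Icc (-1) 1, 0 ≤ p.eval x)
    (hpq : ∀ x ∈ Icc (-1) 1, (1 - x) ^ e * p.eval x ≤ q.eval x) {x : ℝ} (hx : x ∈ Icc (-1) 1) :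
    (1 - x) ^ e * (jacobiHeat hA hb t p).eval x ≤ (jacobiHeat ha hb t q).eval x :=
  le_of_tendsto_of_tendsto' ((tendsto_jacobiResolvent_pow hA hb t p x).const_mul _)
    (tendsto_jacobiResolvent_pow ha hb t q x) fun k =>
      one_sub_rpow_mul_jacobiResolvent_pow_le ha hb hA (by positivity) he hae hp hpq k x hx

end Comparison

/-! ### The heat kernel -/

section HeatKernel

/-- The Jacobi heat kernel on `(-1, 1)`, that is, the kernel of `jacobiHeat` with respect to the
Jacobi weight. -/
noncomputable def heatKernel (a b t x y : ℝ) : ℝ :=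
  ∑' n, exp (-t * jacobiEigenvalue a b n) * (orthonormalJacobi a b n).eval x *
    (orthonormalJacobi a b n).eval y

variable {a b t x y : ℝ}

lemma summable_exp_mul_one_add_jacobiEigenvalue (a b : ℝ) (ht : 0 < t) :
    Summable fun n => exp (-t * jacobiEigenvalue a b n) * (1 + jacobiEigenvalue a b n) := by
  have hgeom : Summable fun n : ℕ => (1 + 2 / t) * exp (-(t / 2) * (a + b)) * exp (n * -t) :=
    (summable_exp_nat_mul_iff.mpr (neg_neg_of_pos ht)).mul_left _
  refine hgeom.of_nonneg_of_le (fun n => mul_nonneg (exp_pos _).le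
    (add_nonneg zero_le_one (jacobiEigenvalue_nonneg a b n))) fun n => ?_
  have hlinear : 2 * n + (a + b) ≤ jacobiEigenvalue a b n := by
    rw [jacobiEigenvalue]
    linarith [sq_nonneg ((n : ℝ) + (a + b + 1) / 2 - 1)]
  have hnonneg := jacobiEigenvalue_nonneg a b n
  generalize jacobiEigenvalue a b n = r at hlinear hnonneg ⊢
  have hexp : 1 + r ≤ (1 + 2 / t) * exp (t / 2 * r) := by
    have hone : 1 ≤ exp (t / 2 * r) := one_le_exp (by positivity)
    have hlin : r ≤ 2 / t * exp (t / 2 * r) := by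
      rw [div_mul_eq_mul_div, le_div_iff₀ ht]
      linarith [add_one_le_exp (t / 2 * r)]
    linarith
  calc exp (-t * r) * (1 + r) ≤ exp (-t * r) * ((1 + 2 / t) * exp (t / 2 * r)) :=
        mul_le_mul_of_nonneg_left hexp (exp_pos _).le
    _ = (1 + 2 / t) * exp (-(t / 2) * r) := by
        rw [mul_left_comm, ← Real.exp_add]; ring_nf
    _ ≤ (1 + 2 / t) * exp (-(t / 2) * (a + b) + n * -t) :=
        mul_le_mul_of_nonneg_left (exp_le_exp.mpr (by nlinarith)) (by positivity)
    _ = (1 + 2 / t) * exp (-(t / 2) * (a + b)) * exp (n * -t) := by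
        rw [Real.exp_add, mul_assoc]

lemma exists_summable_exp_mul_sq_le (ha : -1 < a) (hb : -1 < b) (ht : 0 < t)
    (hx : x ∈ Ioo (-1) 1) : ∃ V ∈ 𝓝 x, ∃ B : ℕ → ℝ, Summable B ∧ ∀ n, ∀ y ∈ V,
      exp (-t * jacobiEigenvalue a b n) * (orthonormalJacobi a b n).eval y ^ 2 ≤ B n := by
  obtain ⟨l, hl, hlx⟩ := exists_between hx.1
  obtain ⟨u, hxu, hu⟩ := exists_between hx.2
  obtain ⟨C, hC⟩ := exists_sq_eval_orthonormalJacobi_le ha hb (hlx.trans hxu)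
    (Icc_subset_Ioo hl hu)
  refine ⟨Icc l u, Icc_mem_nhds hlx hxu, _,
    (summable_exp_mul_one_add_jacobiEigenvalue a b ht).mul_left C, fun n y hy => ?_⟩
  rw [mul_left_comm]
  exact mul_le_mul_of_nonneg_left (hC n y hy) (exp_pos _).le

lemma abs_mul_mul_le_add_sq {c : ℝ} (hc : 0 ≤ c) (p q : ℝ) :
    |c * p * q| ≤ c * p ^ 2 + c * q ^ 2 := by
  rw [mul_assoc, abs_mul, abs_of_nonneg hc, ← mul_add, abs_mul]
  refine mul_le_mul_of_nonneg_left ?_ hc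
  rw [← sq_abs p, ← sq_abs q]
  linarith [two_mul_le_add_sq |p| |q|, mul_nonneg (abs_nonneg p) (abs_nonneg q)]

lemma continuousOn_heatKernel (ha : -1 < a) (hb : -1 < b) (ht : 0 < t) (hx : x ∈ Ioo (-1) 1) :
    ContinuousOn (heatKernel a b t x) (Ioo (-1) 1) := by
  intro y hy
  obtain ⟨V, hV, B, hB, hle⟩ := exists_summable_exp_mul_sq_le ha hb ht hx
  obtain ⟨V', hV', B', hB', hle'⟩ := exists_summable_exp_mul_sq_le ha hb ht hy
  have hcont : ContinuousOn (heatKernel a b t x) V' :=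
    continuousOn_tsum (fun n => by fun_prop) (hB.add hB') fun n z hz =>
      (abs_mul_mul_le_add_sq (exp_pos _).le _ _).trans
        (add_le_add (hle n x (mem_of_mem_nhds hV)) (hle' n z hz))
  exact (hcont.continuousAt hV').continuousWithinAt

lemma summable_integral_norm_heatKernel (ha : -1 < a) (hb : -1 < b) (ht : 0 < t)
    (hx : x ∈ Ioo (-1) 1) : Summable fun n => ∫ y in Icc (-1) 1,
      ‖jacobiWeight a b y * (exp (-t * jacobiEigenvalue a b n) *
        (orthonormalJacobi a b n).eval x * (orthonormalJacobi a b n).eval y)‖ := by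
  obtain ⟨V, hV, B, hB, hle⟩ := exists_summable_exp_mul_sq_le ha hb ht hx
  have hexp : Summable fun n => exp (-t * jacobiEigenvalue a b n) :=
    (summable_exp_mul_one_add_jacobiEigenvalue a b ht).of_nonneg_of_le (fun n => (exp_pos _).le)
      fun n => le_mul_of_one_le_right (exp_pos _).le
        (le_add_of_nonneg_right (jacobiEigenvalue_nonneg a b n))
  set W := jacobiInner a b 1 1
  refine ((hB.mul_right W).add hexp).of_nonneg_of_le
    (fun n => integral_nonneg fun y => norm_nonneg _) fun n => ?_
  set c := exp (-t * jacobiEigenvalue a b n)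
  set p := orthonormalJacobi a b n
  have hc : 0 ≤ c := (exp_pos _).le
  have hW : 0 ≤ W := (jacobiInner_self_pos ha hb one_ne_zero).le
  have hone := (integrableOn_jacobiInner ha hb 1 1).const_mul (c * p.eval x ^ 2)
  have hsq := (integrableOn_jacobiInner ha hb p p).const_mul c
  calc ∫ y in Icc (-1) 1, ‖jacobiWeight a b y * (c * p.eval x * p.eval y)‖
      ≤ ∫ y in Icc (-1) 1, (c * p.eval x ^ 2 * (jacobiWeight a b y *
          ((1 : ℝ[X]).eval y * (1 : ℝ[X]).eval y)) +
            c * (jacobiWeight a b y * (p.eval y * p.eval y))) := by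
        refine setIntegral_mono_on (integrableOn_jacobiWeight_mul ha hb (by fun_prop)).norm
          (hone.add hsq) measurableSet_Icc fun y hy => ?_
        have hw := jacobiWeight_nonneg a b hy
        rw [norm_mul, norm_of_nonneg hw, eval_one]
        exact (mul_le_mul_of_nonneg_left (abs_mul_mul_le_add_sq hc _ _) hw).trans_eq (by ring)
    _ = c * p.eval x ^ 2 * W + c := by
        rw [integral_add hone hsq, integral_const_mul, integral_const_mul]
        change _ + c * jacobiInner a b p p = _
        rw [jacobiInner_orthonormalJacobi ha hb, if_pos rfl, mul_one]
        rfl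
    _ ≤ B n * W + c :=
        add_le_add_left (mul_le_mul_of_nonneg_right (hle n x (mem_of_mem_nhds hV)) hW) c

lemma integrableOn_jacobiWeight_mul_heatKernel (ha : -1 < a) (hb : -1 < b) (ht : 0 < t)
    (hx : x ∈ Ioo (-1) 1) :
    IntegrableOn (fun y => jacobiWeight a b y * heatKernel a b t x y) (Icc (-1) 1) := by
  have hmeas : AEStronglyMeasurable (fun y => jacobiWeight a b y * heatKernel a b t x y)
      (volume.restrict (Icc (-1) 1)) := by
    rw [← restrict_Ioo_eq_restrict_Icc]
    exact ((continuousOn_jacobiWeight a b).mul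
      (continuousOn_heatKernel ha hb ht hx)).aestronglyMeasurable measurableSet_Ioo
  simp only [heatKernel, ← tsum_mul_left] at hmeas ⊢
  exact integrable_tsum_of_summable_integral_norm hmeas
    (fun n => integrableOn_jacobiWeight_mul ha hb (by fun_prop))
    (summable_integral_norm_heatKernel ha hb ht hx)

lemma setIntegral_jacobiWeight_mul_heatKernel_mul (ha : -1 < a) (hb : -1 < b) (ht : 0 < t)
    (hx : x ∈ Ioo (-1) 1) (p : ℝ[X]) :
    ∫ y in Icc (-1) 1, jacobiWeight a b y * heatKernel a b t x y * p.eval y =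
      (jacobiHeat ha hb t p).eval x := by
  obtain ⟨M, hM⟩ := isCompact_Icc.exists_bound_of_continuousOn (s := Icc (-1) 1) p.continuousOn
  have hint : ∀ n, IntegrableOn (fun y => jacobiWeight a b y *
      (exp (-t * jacobiEigenvalue a b n) * (orthonormalJacobi a b n).eval x *
        (orthonormalJacobi a b n).eval y)) (Icc (-1) 1) :=
    fun n => integrableOn_jacobiWeight_mul ha hb (by fun_prop)
  have hint' := fun n => (hint n).mul_continuousOn p.continuousOn isCompact_Icc
  have hsum := hasSum_integral_of_summable_integral_norm hint'
    (((summable_integral_norm_heatKernel ha hb ht hx).mul_right M).of_nonneg_of_le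
      (fun n => integral_nonneg fun y => norm_nonneg _) fun n => by
        rw [← integral_mul_const]
        refine setIntegral_mono_on (hint' n).norm ((hint n).norm.mul_const M) measurableSet_Icc
          fun y hy => ?_
        rw [norm_mul]
        exact mul_le_mul_of_nonneg_left (hM y hy) (norm_nonneg _))
  simp only [tsum_mul_right, tsum_mul_left] at hsum
  refine hsum.unique ((hasSum_jacobiMultiplier ha hb _ p x).congr_fun fun n => ?_)
  rw [jacobiInner, ← integral_const_mul]
  exact integral_congr_ae (.of_forall fun y => by ring)

lemma setIntegral_heatKernel_mul_le {e : ℝ} (ha : -1 < a) (hb : -1 < b) (ht : 0 < t)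
    (he : 0 < e) (hae : 0 ≤ a + e) (hx : x ∈ Ioo (-1) 1) {ψ : ℝ → ℝ}
    (hψ : ContinuousOn ψ (Icc (-1) 1)) (hψ₀ : ∀ y ∈ Icc (-1) 1, 0 ≤ ψ y) :
    (1 - x) ^ e * ∫ y in Icc (-1) 1,
        jacobiWeight (a + 2 * e) b y * heatKernel (a + 2 * e) b t x y * ψ y ≤
      ∫ y in Icc (-1) 1, jacobiWeight a b y * heatKernel a b t x y * (1 - y) ^ e * ψ y := by
  have hA : -1 < a + 2 * e := by linarith
  have hscale : ∀ f : ℝ → ℝ, ∫ y in Icc (-1) 1,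
      (1 - x) ^ e * (jacobiWeight (a + 2 * e) b y * heatKernel (a + 2 * e) b t x y) * f y =
        (1 - x) ^ e * ∫ y in Icc (-1) 1,
          jacobiWeight (a + 2 * e) b y * heatKernel (a + 2 * e) b t x y * f y := fun f => by
    simp only [mul_assoc, integral_const_mul]
  rw [← hscale]
  refine setIntegral_mul_le_of_forall_polynomial (continuous_one_sub_rpow he.le).continuousOn
    ((integrableOn_jacobiWeight_mul_heatKernel hA hb ht hx).const_mul _)
    (integrableOn_jacobiWeight_mul_heatKernel ha hb ht hx) (fun p q hp hpq => ?_) hψ hψ₀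
  rw [hscale, setIntegral_jacobiWeight_mul_heatKernel_mul hA hb ht hx,
    setIntegral_jacobiWeight_mul_heatKernel_mul ha hb ht hx]
  exact one_sub_rpow_mul_jacobiHeat_le ha hb hA ht.le he hae hp hpq (Ioo_subset_Icc_self hx)

lemma jacobiWeight_add_two_mul (a b e : ℝ) (hx : x ∈ Ioo (-1) 1) :
    jacobiWeight (a + 2 * e) b x = jacobiWeight a b x * (1 - x) ^ e * (1 - x) ^ e := by
  rw [jacobiWeight, jacobiWeight, two_mul, ← add_assoc, rpow_add (one_sub_pos hx),
    rpow_add (one_sub_pos hx)]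
  ring

lemma one_sub_rpow_mul_heatKernel_le {e : ℝ} (ha : -1 < a) (hb : -1 < b) (ht : 0 < t)
    (he : 0 < e) (hae : 0 ≤ a + e) (hx : x ∈ Ioo (-1) 1) (hy : y ∈ Ioo (-1) 1) :
    (1 - x) ^ e * (1 - y) ^ e * heatKernel (a + 2 * e) b t x y ≤ heatKernel a b t x y := by
  have hA : -1 < a + 2 * e := by linarith
  have hΦ := continuous_one_sub_rpow he.le
  have hK := continuousOn_heatKernel ha hb ht hx
  have hKA := continuousOn_heatKernel hA hb ht hx
  have hw := continuousOn_jacobiWeight a b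
  have hwA := continuousOn_jacobiWeight (a + 2 * e) b
  suffices hdiff : ∀ z ∈ Ioo (-1) 1, 0 ≤ jacobiWeight a b z * heatKernel a b t x z * (1 - z) ^ e -
      (1 - x) ^ e * (jacobiWeight (a + 2 * e) b z * heatKernel (a + 2 * e) b t x z) by
    have hpos : 0 < jacobiWeight a b y * (1 - y) ^ e :=
      mul_pos (jacobiWeight_pos a b hy) (rpow_pos_of_pos (one_sub_pos hy) e)
    have hyy := hdiff y hy
    rw [jacobiWeight_add_two_mul a b e hy] at hyy
    exact le_of_mul_le_mul_left (by linarith) hpos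
  refine nonneg_of_forall_integral_mul_nonneg (μ := volume) isOpen_Ioo
    (((hw.mul hK).mul hΦ.continuousOn).sub (continuousOn_const.mul (hwA.mul hKA)))
    fun ψ hψ hψ₀ _ hsupp => ?_
  have hzero : ∀ z ∉ Icc (-1 : ℝ) 1, ψ z = 0 := fun z hz =>
    image_eq_zero_of_notMem_tsupport fun hz' => hz (Ioo_subset_Icc_self (hsupp hz'))
  rw [← setIntegral_eq_integral_of_forall_compl_eq_zero (s := Icc (-1) 1)
    fun z hz => by rw [hzero z hz, mul_zero]]
  simp only [sub_mul, mul_assoc (_ ^ e) (_ * _)]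
  rw [integral_sub, integral_const_mul, sub_nonneg]
  · exact setIntegral_heatKernel_mul_le ha hb ht he hae hx hψ.continuousOn fun z _ => hψ₀ z
  · exact ((integrableOn_jacobiWeight_mul_heatKernel ha hb ht hx).mul_continuousOn
      hΦ.continuousOn isCompact_Icc).mul_continuousOn hψ.continuousOn isCompact_Icc
  · exact ((integrableOn_jacobiWeight_mul_heatKernel hA hb ht hx).mul_continuousOn
      hψ.continuousOn isCompact_Icc).const_mul _

end HeatKernel

/-! ### The trigonometric setting -/

section Trigonometric

/-- The factor relating the trigonometric function `phiFn a b n θ` to the orthonormal Jacobi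
polynomial at `cos θ`; it does not depend on `n`. -/
noncomputable def prefactor (a b θ : ℝ) : ℝ :=
  sin (θ / 2) ^ (a + 1 / 2) * cos (θ / 2) ^ (b + 1 / 2) * 2 ^ ((a + b + 1) / 2)

variable {a b t θ φ : ℝ}

lemma cos_mem_Ioo (hθ : θ ∈ Ioo 0 π) : cos θ ∈ Ioo (-1) 1 :=
  ⟨cos_pi ▸ cos_lt_cos_of_nonneg_of_le_pi hθ.1.le le_rfl hθ.2,
    cos_zero ▸ cos_lt_cos_of_nonneg_of_le_pi le_rfl hθ.2.le hθ.1⟩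

lemma sin_half_pos (hθ : θ ∈ Ioo 0 π) : 0 < sin (θ / 2) :=
  sin_pos_of_pos_of_lt_pi (half_pos hθ.1) (by linarith [hθ.1, hθ.2])

lemma prefactor_pos (a b : ℝ) (hθ : θ ∈ Ioo 0 π) : 0 < prefactor a b θ := by
  have hsin := sin_half_pos hθ
  have hcos : 0 < cos (θ / 2) :=
    cos_pos_of_mem_Ioo ⟨by linarith [hθ.1, pi_pos], by linarith [hθ.2]⟩
  rw [prefactor]
  positivity

lemma one_sub_cos_eq_two_mul_sin_half_sq (θ : ℝ) : 1 - cos θ = 2 * sin (θ / 2) ^ 2 := by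
  rw [sin_sq_eq_half_sub, mul_div_cancel₀ θ two_ne_zero]
  ring

lemma prefactor_add_two_mul (a b e : ℝ) (hθ : θ ∈ Ioo 0 π) :
    prefactor (a + 2 * e) b θ = prefactor a b θ * (1 - cos θ) ^ e := by
  have hsin := sin_half_pos hθ
  have hexp : a + 2 * e + 1 / 2 = a + 1 / 2 + e + e := by ring
  have hexp₂ : (a + 2 * e + b + 1) / 2 = (a + b + 1) / 2 + e := by ring
  rw [one_sub_cos_eq_two_mul_sin_half_sq, sq, mul_rpow two_pos.le (by positivity),
    mul_rpow hsin.le hsin.le, prefactor, prefactor, hexp, hexp₂, rpow_add hsin, rpow_add hsin,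
    rpow_add two_pos]
  ring

lemma phiFn_eq_prefactor_mul_eval (a b : ℝ) (n : ℕ) (hθ : θ ∈ Ioo 0 π) :
    phiFn a b n θ = prefactor a b θ * (orthonormalJacobi a b n).eval (cos θ) := by
  rw [phiFn, trigP, jacobiP_eq_eval a b n (cos_mem_Ioo hθ), prefactor, orthonormalJacobi,
    eval_smul, smul_eq_mul]
  ring

lemma funHeat_eq_prefactor_mul_heatKernel (a b t : ℝ) (hθ : θ ∈ Ioo 0 π) (hφ : φ ∈ Ioo 0 π) :
    funHeat a b t θ φ =
      prefactor a b θ * prefactor a b φ * heatKernel a b t (cos θ) (cos φ) := by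
  rw [funHeat, heatKernel, ← tsum_mul_left]
  refine tsum_congr fun n => ?_
  rw [phiFn_eq_prefactor_mul_eval a b n hθ, phiFn_eq_prefactor_mul_eval a b n hφ,
    jacobiEigenvalue]
  ring

lemma jacobiWeight_neg (a b x : ℝ) : jacobiWeight a b (-x) = jacobiWeight b a x := by
  rw [jacobiWeight, jacobiWeight, sub_neg_eq_add, ← sub_eq_add_neg, mul_comm]

lemma neg_one_pow_mul_self (n : ℕ) : (-1 : ℝ) ^ n * (-1) ^ n = 1 := by
  rw [← mul_pow, neg_one_mul, neg_neg, one_pow]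

lemma jacobiP_neg (a b : ℝ) (n : ℕ) (x : ℝ) :
    jacobiP a b n (-x) = (-1) ^ n * jacobiP b a n x := by
  have hderiv := iteratedDeriv_comp_neg n (jacobiWeight (a + n) (b + n)) x
  simp only [jacobiWeight_neg, smul_eq_mul] at hderiv
  change _ * _ * _ * iteratedDeriv n (jacobiWeight (a + n) (b + n)) (-x) =
    _ * (_ * _ * _ * iteratedDeriv n (jacobiWeight (b + n) (a + n)) x)
  rw [hderiv, sub_neg_eq_add, ← sub_eq_add_neg, mul_left_comm, ← mul_assoc ((-1) ^ n) ((-1) ^ n),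
    neg_one_pow_mul_self]
  ring

lemma hJacobi_comm (a b : ℝ) (n : ℕ) : hJacobi a b n = hJacobi b a n := by
  have hreflect := intervalIntegral.integral_comp_neg (a := -1) (b := 1)
    fun x => jacobiP a b n x ^ 2 * (1 - x) ^ a * (1 + x) ^ b
  rw [neg_neg] at hreflect
  rw [hJacobi, hJacobi, integral_Icc_eq_integral_Ioc, integral_Icc_eq_integral_Ioc,
    ← intervalIntegral.integral_of_le (by norm_num),
    ← intervalIntegral.integral_of_le (by norm_num), ← hreflect]
  refine intervalIntegral.integral_congr fun x _ => ?_
  simp only [jacobiP_neg, sub_neg_eq_add, ← sub_eq_add_neg]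
  rw [mul_pow, sq ((-1) ^ n), neg_one_pow_mul_self]
  ring

lemma phiFn_pi_sub (a b : ℝ) (n : ℕ) (θ : ℝ) :
    phiFn a b n (π - θ) = (-1) ^ n * phiFn b a n θ := by
  rw [phiFn, phiFn, trigP, trigP, sub_div, sin_pi_div_two_sub, cos_pi_div_two_sub, cos_pi_sub,
    jacobiP_neg, hJacobi_comm, add_comm a b]
  ring

lemma funHeat_pi_sub (a b t θ φ : ℝ) :
    funHeat a b t (π - θ) (π - φ) = funHeat b a t θ φ := by
  rw [funHeat, funHeat]
  refine tsum_congr fun n => ?_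
  rw [phiFn_pi_sub, phiFn_pi_sub, add_comm a b, mul_assoc, mul_mul_mul_comm,
    neg_one_pow_mul_self, one_mul, mul_assoc]

/- Since `0 ^ s = 0` exactly when `s ≠ 0`, for `a = -1/2` the vanishing is due to the factor
`(1 - x) ^ (-a)` in `jacobiP` rather than to the power of the sine. -/
lemma phiFn_zero (a b : ℝ) (n : ℕ) : phiFn a b n 0 = 0 := by
  rw [phiFn, trigP, jacobiP, zero_div, sin_zero, cos_zero, sub_self]
  rcases eq_or_ne (a + 1 / 2) 0 with h | h
  · rw [zero_rpow (x := -a) (by linarith)]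
    ring
  · rw [zero_rpow h]
    ring

lemma phiFn_pi (a b : ℝ) (n : ℕ) : phiFn a b n π = 0 := by
  simpa only [sub_zero, phiFn_zero, mul_zero] using phiFn_pi_sub a b n 0

lemma funHeat_add_left_le {ε : ℝ} (ha : -1 < a) (hb : -1 < b) (hε : 0 ≤ ε) (haε : -ε / 2 ≤ a)
    (hθ : θ ∈ Icc 0 π) (hφ : φ ∈ Icc 0 π) (ht : 0 < t) :
    funHeat (a + ε) b t θ φ ≤ funHeat a b t θ φ := by
  rcases hε.eq_or_lt with rfl | hε
  · rw [add_zero]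
  rcases eq_endpoints_or_mem_Ioo_of_mem_Icc hθ with rfl | rfl | hθ
  · simp [funHeat, phiFn_zero]
  · simp [funHeat, phiFn_pi]
  rcases eq_endpoints_or_mem_Ioo_of_mem_Icc hφ with rfl | rfl | hφ
  · simp [funHeat, phiFn_zero]
  · simp [funHeat, phiFn_pi]
  obtain ⟨e, rfl⟩ : ∃ e, ε = 2 * e := ⟨ε / 2, by ring⟩
  have hpos := mul_pos (prefactor_pos a b hθ) (prefactor_pos a b hφ)
  calc funHeat (a + 2 * e) b t θ φ
      = prefactor a b θ * prefactor a b φ * ((1 - cos θ) ^ e * (1 - cos φ) ^ e *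
          heatKernel (a + 2 * e) b t (cos θ) (cos φ)) := by
        rw [funHeat_eq_prefactor_mul_heatKernel _ _ _ hθ hφ, prefactor_add_two_mul a b e hθ,
          prefactor_add_two_mul a b e hφ]
        ring
    _ ≤ prefactor a b θ * prefactor a b φ * heatKernel a b t (cos θ) (cos φ) :=
        mul_le_mul_of_nonneg_left (one_sub_rpow_mul_heatKernel_le ha hb ht (by linarith)
          (by linarith) (cos_mem_Ioo hθ) (cos_mem_Ioo hφ)) hpos.le
    _ = funHeat a b t θ φ := (funHeat_eq_prefactor_mul_heatKernel a b t hθ hφ).symm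

lemma funHeat_add_right_le {δ : ℝ} (ha : -1 < a) (hb : -1 < b) (hδ : 0 ≤ δ) (hbδ : -δ / 2 ≤ b)
    (hθ : θ ∈ Icc 0 π) (hφ : φ ∈ Icc 0 π) (ht : 0 < t) :
    funHeat a (b + δ) t θ φ ≤ funHeat a b t θ φ := by
  rw [← funHeat_pi_sub (b + δ) a, ← funHeat_pi_sub b a]
  exact funHeat_add_left_le hb ha hδ hbδ ⟨by linarith [hθ.2], by linarith [hθ.1]⟩
    ⟨by linarith [hφ.2], by linarith [hφ.1]⟩ ht

lemma funHeat_add_le {ε δ : ℝ} (ha : -1 < a) (hb : -1 < b) (hε : 0 ≤ ε) (hδ : 0 ≤ δ)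
    (haε : -ε / 2 ≤ a) (hbδ : -δ / 2 ≤ b) (hθ : θ ∈ Icc 0 π) (hφ : φ ∈ Icc 0 π) (ht : 0 < t) :
    funHeat (a + ε) (b + δ) t θ φ ≤ funHeat a b t θ φ :=
  (funHeat_add_right_le (by linarith) hb hδ hbδ hθ hφ ht).trans
    (funHeat_add_left_le ha hb hε haε hθ hφ ht)

end Trigonometric

end JacobiHeat

/-- Corollary 3.6 in the 'function' setting: 𝔾_t^{(α+ε,β+δ)} ≤ 𝔾_t^{(α,β)} for ε, δ ≥ 0
with α ≥ -ε/2, β ≥ -δ/2; in particular 𝔾_t^{(α,β)} is nonincreasing in each parameter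
α ≥ 0 and β ≥ 0. -/
theorem stmt14 (a b ε δ : ℝ) (ha : -1 < a) (hb : -1 < b) (hε : 0 ≤ ε) (hδ : 0 ≤ δ)
    (haε : -ε/2 ≤ a) (hbδ : -δ/2 ≤ b) :
    (∀ θ ∈ Set.Icc 0 π, ∀ φ ∈ Set.Icc 0 π, ∀ t : ℝ, 0 < t →
      funHeat (a + ε) (b + δ) t θ φ ≤ funHeat a b t θ φ) ∧
    (∀ a₁ b₁ a₂ b₂ : ℝ, 0 ≤ a₁ → a₁ ≤ a₂ → 0 ≤ b₁ → b₁ ≤ b₂ →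
      ∀ θ ∈ Set.Icc 0 π, ∀ φ ∈ Set.Icc 0 π, ∀ t : ℝ, 0 < t →
        funHeat a₂ b₂ t θ φ ≤ funHeat a₁ b₁ t θ φ) := by
  refine ⟨fun θ hθ φ hφ t ht => JacobiHeat.funHeat_add_le ha hb hε hδ haε hbδ hθ hφ ht, ?_⟩
  intro a₁ b₁ a₂ b₂ ha₁ ha₂ hb₁ hb₂ θ hθ φ hφ t ht
  have hmono := JacobiHeat.funHeat_add_le (a := a₁) (b := b₁) (ε := a₂ - a₁) (δ := b₂ - b₁)
    (by linarith) (by linarith) (by linarith) (by linarith) (by linarith) (by linarith) hθ hφ ht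
  rwa [add_sub_cancel, add_sub_cancel] at hmono
end
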